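/- arXiv:1007.1118 — 5 statements merged into one kernel-verified Lean document; each statement's English description precedes it below -/
import Mathlib

section
/- Let G be a finitely presented group, given as G = PresentedGroup R for a finite set of relators R ⊆ FreeGroup (Fin n), and suppose that G contains a subgroup isomorphic to the direct product of two nonabelian free groups of rank 2, i.e. there is an injective group homomorphism (FreeGroup Bool × FreeGroup Bool) → G. Then there is no computable function f : List Word → List Word → Bool such that for all lists S and T of words, f S T = true if and only if the subgroup of G generated by the images of the words in S is isomorphic to the subgroup of G generated by the images of the words in T. -/
/-- The subgroup of the finitely presented group `PresentedGroup R` generated by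
the images of the words in the list `S`. -/
def wordsSubgroup {n : ℕ} (R : Set (FreeGroup (Fin n)))
    (S : List (List (Fin n × Bool))) : Subgroup (PresentedGroup R) :=
  Subgroup.closure {g | ∃ u ∈ S, g = PresentedGroup.mk R (FreeGroup.mk u)}

/-!
The subgroups in question are the fiber squares of quotients `Q = F ⧸ N` of free groups, that is,
the pairs of elements of `F` with the same image in `Q`, embedded in `F₂ × F₂`. The fiber square is
generated by the diagonal and by the elements `(1, r)` for the relators `r`, so a finite
presentation of `Q` gives finitely many generators. Free groups are commutative-transitive; hence,
for noncommutative `N`, the elements of the fiber square with noncommutative centralizer generate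
`N × N`, and the isomorphism type of the fiber square determines `Q`.

It remains to construct a computable sequence of finite presentations such that it is undecidable
which of the groups presented are isomorphic to a fixed free group. Encode the halting problem as
connectedness `v ∼ h` in a system of affine rules on integer vectors, the digits of a number being
the letters of a stack. Present a group by commuting translations, an element `t` whose conjugates
mark the vectors, an element `k`, stable letters that implement the rules by conjugation, and
elements that conjugate `t` to each of the other symbols; let `k` commute with the mark of `h` and
conjugate the mark of `v` to its square. If `v ∼ h`, then `k` commutes with the mark of `v` as well,
so that `t` and with it all base symbols collapse and the group is free. Otherwise, an action in
which `k` commutes with precisely the marks of the vectors connected to `h` extends along HNN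
extensions; so the mark of `v` survives as a nontrivial element that is conjugate to its own square,
which is impossible in a free group.
-/

open Function Relation

universe u

/-! ### Free groups -/

/-- A group is commutative-transitive if commutation is a transitive relation on its nontrivial
elements. -/
def IsCommutativeTransitive (G : Type*) [Group G] : Prop :=
  ∀ ⦃a b c : G⦄, b ≠ 1 → Commute a b → Commute b c → Commute a c

/-- A group is free of Baumslag–Solitar relations if no nontrivial element is conjugate to its own
square, as happens in the group `BS(1, 2)`. -/
def IsBaumslagSolitarFree (G : Type*) [Group G] : Prop :=
  ∀ ⦃k v : G⦄, k * v * k⁻¹ = v ^ 2 → v = 1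

theorem IsBaumslagSolitarFree.of_mulEquiv {G H : Type*} [Group G] [Group H]
    (hH : IsBaumslagSolitarFree H) (e : G ≃* H) : IsBaumslagSolitarFree G := fun k v h =>
  e.map_eq_one_iff.1 (hH (k := e k) (by rw [← map_pow, ← h, map_mul, map_mul, map_inv]))

section FreeGroup

variable {X : Type*}

theorem eq_one_of_forall_commute_of [Nontrivial X] {z : FreeGroup X}
    (hz : ∀ x, Commute z (FreeGroup.of x)) : z = 1 := by
  classical
  rcases hw : z.toWord with _ | ⟨⟨p, b⟩, L⟩
  · exact FreeGroup.toWord_eq_nil_iff.1 hw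
  obtain ⟨q, hq⟩ := exists_ne p
  have hleft : (FreeGroup.of q * z).toWord = (q, true) :: z.toWord := by
    rw [FreeGroup.toWord_mul, FreeGroup.toWord_of]
    refine FreeGroup.IsReduced.reduce_eq ?_
    rw [List.singleton_append, hw, FreeGroup.isReduced_cons_cons]
    exact ⟨fun h => absurd h hq, hw ▸ FreeGroup.isReduced_toWord⟩
  have hright : FreeGroup.reduce (z.toWord ++ [(q, true)]) = (q, true) :: z.toWord := by
    rw [← hleft, ← (hz q).eq, FreeGroup.toWord_mul, FreeGroup.toWord_of]
  have hcons : (q, true) :: z.toWord = z.toWord ++ [(q, true)] := by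
    rw [← hright]
    exact FreeGroup.reduce.red.sublist.eq_of_length (by simp [hright])
  simp only [hw, List.cons_append, List.cons.injEq, Prod.mk.injEq] at hcons
  exact absurd hcons.1.1 hq

theorem freeGroup_commute_of_subsingleton [Subsingleton X] (a b : FreeGroup X) :
    Commute a b := by
  cases isEmpty_or_nonempty X with
  | inl _ => exact Subsingleton.elim _ _
  | inr _ =>
    cases nonempty_unique X
    exact IsCyclic.commGroup.mul_comm a b

theorem isCommutativeTransitive_freeGroup : IsCommutativeTransitive (FreeGroup X) := by
  intro b a c ha hb hc
  let H : Subgroup (FreeGroup X) := Subgroup.centralizer {a}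
  have mem_H (g) : g ∈ H ↔ Commute a g := Subgroup.mem_centralizer_singleton_iff.trans eq_comm
  let φ := IsFreeGroup.mulEquiv H
  let a' : H := ⟨a, (mem_H a).2 (Commute.refl a)⟩
  let b' : H := ⟨b, (mem_H b).2 hb.symm⟩
  let c' : H := ⟨c, (mem_H c).2 hc⟩
  rcases subsingleton_or_nontrivial (IsFreeGroup.Generators H) with _ | _
  · have h := (freeGroup_commute_of_subsingleton (φ.symm b') (φ.symm c')).map φ
    rw [φ.apply_symm_apply, φ.apply_symm_apply] at h
    exact h.map H.subtype
  · have hcentral (x) : Commute (φ.symm a') (FreeGroup.of x) := by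
      have h : Commute a' (φ (FreeGroup.of x)) :=
        Subtype.ext ((mem_H _).1 (φ (FreeGroup.of x)).2)
      simpa only [φ.symm_apply_apply] using h.map φ.symm
    have ha' : a' = 1 := φ.symm.map_eq_one_iff.1 (eq_one_of_forall_commute_of hcentral)
    exact absurd (congrArg Subtype.val ha') ha

theorem le_norm_pow [DecidableEq X] {v : FreeGroup X} (hv : v ≠ 1) (n : ℕ) :
    n ≤ (v ^ n).norm := by
  rcases eq_or_ne n 0 with rfl | hn
  · exact Nat.zero_le _
  have hpos : FreeGroup.reduceCyclically v.toWord ≠ [] := fun h => hv <| by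
    have := FreeGroup.reduceCyclically.conj_conjugator_reduceCyclically v.toWord
    rw [h, List.append_nil] at this
    rw [← FreeGroup.mk_toWord (x := v), ← this, ← FreeGroup.mul_mk, ← FreeGroup.inv_mk,
      mul_inv_cancel]
  have hlen := List.length_pos_iff.2 hpos
  rw [FreeGroup.norm, FreeGroup.toWord_pow, FreeGroup.reduceCyclically.reduce_flatten_replicate
    FreeGroup.isReduced_toWord, if_neg hn]
  simp only [List.length_append, List.length_flatten, List.map_replicate, List.sum_replicate,
    smul_eq_mul]
  nlinarith

theorem isBaumslagSolitarFree_freeGroup : IsBaumslagSolitarFree (FreeGroup X) := by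
  classical
  intro k v h
  by_contra hv
  have hroot : k⁻¹ * v ^ 2 * k = v := by rw [← h]; group
  have roots (n : ℕ) : ∃ u, u ^ 2 ^ n = v := by
    induction n with
    | zero => exact ⟨v, pow_one v⟩
    | succ n ih =>
      obtain ⟨u, hu⟩ := ih
      refine ⟨k⁻¹ * u * k, ?_⟩
      have hconj : (k⁻¹ * u * k) ^ 2 ^ (n + 1) = k⁻¹ * u ^ 2 ^ (n + 1) * k := by
        simpa using conj_pow (a := k⁻¹) (b := u) (i := 2 ^ (n + 1))
      rw [hconj, pow_succ, pow_mul, hu, hroot]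
  obtain ⟨u, hu⟩ := roots v.norm
  have hu1 : u ≠ 1 := by rintro rfl; exact hv (by rw [← hu, one_pow])
  have hle := le_norm_pow hu1 (2 ^ v.norm)
  rw [hu] at hle
  exact (Nat.lt_two_pow_self).not_ge hle

theorem isBaumslagSolitarFree_quotient_normalClosure_of (s : Set X) :
    IsBaumslagSolitarFree
      (FreeGroup X ⧸ Subgroup.normalClosure (FreeGroup.of '' s : Set (FreeGroup X))) := by
  classical
  set N := Subgroup.normalClosure (FreeGroup.of '' s : Set (FreeGroup X))
  let φ : FreeGroup X →* FreeGroup X := FreeGroup.lift fun x => if x ∈ s then 1 else FreeGroup.of x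
  have hφ : N ≤ φ.ker := Subgroup.normalClosure_le_normal <| by
    rintro _ ⟨x, hx, rfl⟩
    simp [φ, hx]
  have mk_φ (w : FreeGroup X) : ((φ w : FreeGroup X) : FreeGroup X ⧸ N) = w := by
    suffices (QuotientGroup.mk' N).comp φ = QuotientGroup.mk' N from DFunLike.congr_fun this w
    refine FreeGroup.ext_hom _ _ fun x => ?_
    by_cases hx : x ∈ s
    · have hxN : FreeGroup.of x ∈ N := Subgroup.subset_normalClosure ⟨x, hx, rfl⟩
      simp [φ, hx, (QuotientGroup.eq_one_iff _).2 hxN]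
    · simp [φ, hx]
  intro k v
  induction k using QuotientGroup.induction_on with | H k
  induction v using QuotientGroup.induction_on with | H v
  intro h
  have hmem : φ (k * v * k⁻¹) = φ (v ^ 2) :=
    (MonoidHom.eq_iff φ).2 (hφ (QuotientGroup.eq.1 h.symm))
  simp only [map_mul, map_inv, map_pow] at hmem
  rw [← mk_φ v, isBaumslagSolitarFree_freeGroup hmem, QuotientGroup.mk_one]

end FreeGroup

/-! ### Fiber squares -/

/-- The subgroup generated by the elements whose centralizer is not commutative; every isomorphism
of groups preserves it. -/
def nonabelianCentralizerSubgroup (G : Type*) [Group G] : Subgroup G :=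
  Subgroup.closure {g | ∃ a b, Commute g a ∧ Commute g b ∧ ¬ Commute a b}

theorem map_nonabelianCentralizerSubgroup {G H : Type*} [Group G] [Group H] (φ : G ≃* H) :
    (nonabelianCentralizerSubgroup G).map φ.toMonoidHom = nonabelianCentralizerSubgroup H := by
  rw [nonabelianCentralizerSubgroup, MonoidHom.map_closure]
  congr 1
  ext h
  obtain ⟨g, rfl⟩ := φ.surjective h
  refine φ.injective.mem_set_image.trans ?_
  simp only [Set.mem_ofPred_eq, φ.surjective.exists, commute_map_iff φ.injective]

/-- The fiber square of the quotient map `F → F ⧸ N`: the pairs of elements of `F` with the same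
image. -/
def fiberSquare {F : Type*} [Group F] (N : Subgroup F) [N.Normal] : Subgroup (F × F) :=
  ((QuotientGroup.mk' N).comp (MonoidHom.fst F F)).eqLocus
    ((QuotientGroup.mk' N).comp (MonoidHom.snd F F))

section fiberSquare

variable {F : Type*} [Group F] {N : Subgroup F} [N.Normal]

theorem mem_fiberSquare {g : F × F} :
    g ∈ fiberSquare N ↔ (g.1 : F ⧸ N) = (g.2 : F ⧸ N) := Iff.rfl

theorem diag_mem_fiberSquare (a : F) : ((a, a) : F × F) ∈ fiberSquare N :=
  mem_fiberSquare.2 rfl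

theorem inl_mem_fiberSquare {a : F} : ((a, 1) : F × F) ∈ fiberSquare N ↔ a ∈ N := by
  rw [mem_fiberSquare, QuotientGroup.mk_one, QuotientGroup.eq_one_iff]

theorem inr_mem_fiberSquare {a : F} : ((1, a) : F × F) ∈ fiberSquare N ↔ a ∈ N := by
  rw [mem_fiberSquare, QuotientGroup.mk_one, eq_comm, QuotientGroup.eq_one_iff]

theorem fiberSquare_normalClosure {S : Set F} (hS : Subgroup.closure S = ⊤) (rels : Set F) :
    fiberSquare (Subgroup.normalClosure rels) =
      Subgroup.closure ((fun x => (x, x)) '' S ∪ (fun w => (1, w)) '' rels) := by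
  set K := Subgroup.closure ((fun x : F => (x, x)) '' S ∪ (fun w => (1, w)) '' rels) with hK
  have hdiag (w : F) : (w, w) ∈ K := by
    suffices ⊤ ≤ K.comap ((MonoidHom.id F).prod (MonoidHom.id F)) from this (Subgroup.mem_top w)
    rw [← hS, Subgroup.closure_le]
    exact fun x hx => Subgroup.subset_closure (Or.inl ⟨x, hx, rfl⟩)
  have hright : Subgroup.normalClosure rels ≤ K.comap (MonoidHom.inr F F) := by
    refine (Subgroup.closure_le _).2 fun v hv => ?_
    obtain ⟨u, hu, hv⟩ := Group.mem_conjugatesOfSet_iff.1 hv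
    obtain ⟨c, rfl⟩ := isConj_iff.1 hv
    have hu' : ((1 : F), u) ∈ K := Subgroup.subset_closure (Or.inr ⟨u, hu, rfl⟩)
    simpa using K.mul_mem (K.mul_mem (hdiag c) hu') (K.inv_mem (hdiag c))
  apply le_antisymm
  · rintro ⟨a, b⟩ h
    have hab : a⁻¹ * b ∈ Subgroup.normalClosure rels := QuotientGroup.eq.1 (mem_fiberSquare.1 h)
    simpa using K.mul_mem (hdiag a) (hright hab)
  · rw [hK, Subgroup.closure_le]
    rintro _ (⟨x, -, rfl⟩ | ⟨w, hw, rfl⟩)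
    · exact diag_mem_fiberSquare x
    · exact inr_mem_fiberSquare.2 (Subgroup.subset_normalClosure hw)

/-- The quotient map `F → F ⧸ N` read off either coordinate of the fiber square. -/
def fiberSquareHom (N : Subgroup F) [N.Normal] : fiberSquare N →* F ⧸ N :=
  ((QuotientGroup.mk' N).comp (MonoidHom.fst F F)).comp (fiberSquare N).subtype

theorem fiberSquareHom_surjective : Surjective (fiberSquareHom N) := fun q => by
  obtain ⟨a, rfl⟩ := QuotientGroup.mk_surjective q
  exact ⟨⟨(a, a), diag_mem_fiberSquare a⟩, rfl⟩

theorem mem_ker_fiberSquareHom {g : fiberSquare N} :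
    g ∈ (fiberSquareHom N).ker ↔ g.1.1 ∈ N ∧ g.1.2 ∈ N := by
  have h1 : g ∈ (fiberSquareHom N).ker ↔ g.1.1 ∈ N := QuotientGroup.eq_one_iff _
  rw [h1, ← QuotientGroup.eq_one_iff, ← QuotientGroup.eq_one_iff g.1.2,
    ← mem_fiberSquare.1 g.2, and_self]

theorem ker_fiberSquareHom_le (hN : ∃ a ∈ N, ∃ b ∈ N, ¬ Commute a b) :
    (fiberSquareHom N).ker ≤ nonabelianCentralizerSubgroup (fiberSquare N) := by
  obtain ⟨a, ha, b, hb, hab⟩ := hN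
  rintro ⟨⟨u, v⟩, hg⟩ hker
  obtain ⟨hu, hv⟩ := mem_ker_fiberSquareHom.1 hker
  have hleft : (⟨(u, 1), inl_mem_fiberSquare.2 hu⟩ : fiberSquare N) ∈
      nonabelianCentralizerSubgroup (fiberSquare N) :=
    Subgroup.subset_closure ⟨⟨(1, a), inr_mem_fiberSquare.2 ha⟩, ⟨(1, b), inr_mem_fiberSquare.2 hb⟩,
      Subtype.ext (by simp), Subtype.ext (by simp),
      fun h => hab (h.map ((MonoidHom.snd F F).comp (fiberSquare N).subtype))⟩
  have hright : (⟨(1, v), inr_mem_fiberSquare.2 hv⟩ : fiberSquare N) ∈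
      nonabelianCentralizerSubgroup (fiberSquare N) :=
    Subgroup.subset_closure ⟨⟨(a, 1), inl_mem_fiberSquare.2 ha⟩, ⟨(b, 1), inl_mem_fiberSquare.2 hb⟩,
      Subtype.ext (by simp), Subtype.ext (by simp),
      fun h => hab (h.map ((MonoidHom.fst F F).comp (fiberSquare N).subtype))⟩
  have hmul := Subgroup.mul_mem _ hleft hright
  convert hmul using 1
  exact Subtype.ext (by simp)

theorem nonabelianCentralizerSubgroup_fiberSquare_le (hF : IsCommutativeTransitive F) :
    nonabelianCentralizerSubgroup (fiberSquare N) ≤ (fiberSquareHom N).ker := by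
  rw [nonabelianCentralizerSubgroup, Subgroup.closure_le]
  rintro ⟨⟨u, v⟩, hg⟩ ⟨⟨⟨a₁, a₂⟩, ha⟩, ⟨⟨b₁, b₂⟩, hb⟩, hga, hgb, hab⟩
  have hga' := Prod.commute_iff.1 (hga.map (fiberSquare N).subtype)
  have hgb' := Prod.commute_iff.1 (hgb.map (fiberSquare N).subtype)
  have huv : u = 1 ∨ v = 1 := by
    by_contra! h
    exact hab <| Subtype.ext <| Prod.ext (hF h.1 hga'.1.symm hgb'.1).eq
      (hF h.2 hga'.2.symm hgb'.2).eq
  rcases huv with rfl | rfl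
  · exact QuotientGroup.mk_one N
  · exact mem_fiberSquare.1 hg

theorem ker_fiberSquareHom (hF : IsCommutativeTransitive F)
    (hN : ∃ a ∈ N, ∃ b ∈ N, ¬ Commute a b) :
    (fiberSquareHom N).ker = nonabelianCentralizerSubgroup (fiberSquare N) :=
  (ker_fiberSquareHom_le hN).antisymm (nonabelianCentralizerSubgroup_fiberSquare_le hF)

theorem nonempty_quotient_mulEquiv_of_fiberSquare {F' : Type*} [Group F'] {N' : Subgroup F'}
    [N'.Normal] (hF : IsCommutativeTransitive F) (hF' : IsCommutativeTransitive F')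
    (hN : ∃ a ∈ N, ∃ b ∈ N, ¬ Commute a b) (hN' : ∃ a ∈ N', ∃ b ∈ N', ¬ Commute a b)
    (φ : fiberSquare N ≃* fiberSquare N') : Nonempty (F ⧸ N ≃* F' ⧸ N') := by
  have hker : (fiberSquareHom N).ker.map φ.toMonoidHom = (fiberSquareHom N').ker := by
    rw [ker_fiberSquareHom hF hN, ker_fiberSquareHom hF' hN', map_nonabelianCentralizerSubgroup]
  exact ⟨(QuotientGroup.quotientKerEquivOfSurjective _ fiberSquareHom_surjective).symm.trans <|
    (QuotientGroup.congr _ _ φ hker).trans <|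
    QuotientGroup.quotientKerEquivOfSurjective _ fiberSquareHom_surjective⟩

end fiberSquare

/-! ### Affine systems and stack machines -/

/-- A finite system of rules `α u + p ↦ β u + q` on integer vectors, where the multipliers `α` and
`β` act coordinatewise and have no zero entries. -/
structure AffineSystem (I : Type*) where
  /-- The index type of the rules. -/
  Rule : Type
  finite_rule : Finite Rule
  /-- The multiplier `α` of the left-hand side of a rule. -/
  srcMul : Rule → I → ℤ
  /-- The offset `p` of the left-hand side of a rule. -/
  srcOff : Rule → I → ℤ
  /-- The multiplier `β` of the right-hand side of a rule. -/
  tgtMul : Rule → I → ℤ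
  /-- The offset `q` of the right-hand side of a rule. -/
  tgtOff : Rule → I → ℤ
  srcMul_ne_zero : ∀ r i, srcMul r i ≠ 0
  tgtMul_ne_zero : ∀ r i, tgtMul r i ≠ 0

attribute [instance] AffineSystem.finite_rule

/-- One application of a rule of an affine system. -/
def AffineSystem.Step {I : Type*} (A : AffineSystem I) (v w : I → ℤ) : Prop :=
  ∃ (r : A.Rule) (u : I → ℤ), v = A.srcMul r * u + A.srcOff r ∧ w = A.tgtMul r * u + A.tgtOff r

theorem reflTransGen_of_eqvGen_of_functional {α : Type*} {r : α → α → Prop} {a h : α}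
    (hr : ∀ a b c, r a b → r a c → b = c) (hh : ∀ a, r h a → a = h) (H : EqvGen r a h) :
    ReflTransGen r a h := by
  suffices key : ∀ a b, EqvGen r a b → (ReflTransGen r a h ↔ ReflTransGen r b h) from
    (key a h H).2 .refl
  intro a b hab
  induction hab with
  | rel a b hab =>
    refine ⟨fun H => ?_, fun H => H.head hab⟩
    rcases H.cases_head with rfl | ⟨c, hac, hc⟩
    · rw [hh b hab]
    · rwa [hr a b c hab hac]
  | refl => rfl
  | symm _ _ _ ih => exact ih.symm
  | trans _ _ _ _ _ ih₁ ih₂ => exact ih₁.trans ih₂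

theorem eq_and_eq_of_mul_add_eq {m x y : ℤ} {c d : ℕ} (hc : (c : ℤ) < m) (hd : (d : ℤ) < m)
    (h : m * x + c = m * y + d) : x = y ∧ c = d := by
  have hm : 0 < m := c.cast_nonneg.trans_lt hc
  have hx := (Int.ediv_emod_unique hm).2 ⟨(add_comm _ _).trans h, c.cast_nonneg, hc⟩
  have hy := (Int.ediv_emod_unique hm).2 ⟨add_comm (d : ℤ) (m * y), d.cast_nonneg, hd⟩
  exact ⟨hx.1.symm.trans hy.1, Int.ofNat_inj.1 (hx.2.symm.trans hy.2)⟩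

namespace StackMachine

section Encoding

variable {Γ : Type*} [Fintype Γ]

variable (Γ) in
/-- The base of the number system that encodes stacks. -/
def base : ℕ := Fintype.card Γ + 1

/-- The digit of a top letter; the digit `0` is reserved for the empty stack. -/
noncomputable def digit : Option Γ → ℕ
  | none => 0
  | some g => Fintype.equivFin Γ g + 1

theorem digit_lt (d : Option Γ) : digit d < base Γ := by
  cases d <;> simp [digit, base]

theorem digit_injective : Injective (digit (Γ := Γ)) := by
  rintro (_ | a) (_ | b) h
  · rfl
  · exact absurd h.symm (Nat.succ_ne_zero _)
  · exact absurd h (Nat.succ_ne_zero _)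
  · exact congrArg some ((Fintype.equivFin Γ).injective (Fin.val_injective (Nat.succ.inj h)))

/-- The number that encodes a stack, the top letter being its lowest digit. -/
noncomputable def code (l : List Γ) : ℕ :=
  Nat.ofDigits (base Γ) (l.map (digit ∘ some))

theorem code_nil : code ([] : List Γ) = 0 := rfl

theorem code_eq (l : List Γ) : code l = base Γ * code l.tail + digit l.head? := by
  cases l with
  | nil => rfl
  | cons g l => exact Nat.add_comm _ _

theorem code_append (l l' : List Γ) : code (l ++ l') = base Γ ^ l.length * code l' + code l := by
  rw [code, List.map_append, Nat.ofDigits_append, List.length_map, Nat.add_comm]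
  rfl

theorem code_injective : Injective (code (Γ := Γ)) := by
  cases isEmpty_or_nonempty Γ with
  | inl _ => exact injective_of_subsingleton _
  | inr _ =>
    have digits_code (l : List Γ) : Nat.digits (base Γ) (code l) = l.map (digit ∘ some) := by
      refine Nat.digits_ofDigits _ (Nat.succ_lt_succ Fintype.card_pos) _ ?_ fun _ => ?_
      · exact List.forall_mem_map.2 fun g _ => digit_lt (some g)
      · rw [List.getLast_map]
        exact Nat.succ_ne_zero _
    exact fun l l' h => (digit_injective.comp (Option.some_injective Γ)).list_map <| by
      rw [← digits_code, h, digits_code]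

end Encoding

section Step

variable {Q K : Type*} {Γ : K → Type*}

/-- One step of a finite automaton with stacks: depending on the state and the top letters, the
state changes and the top letters are replaced by words. -/
def step (μ : Q → (∀ k, Option (Γ k)) → Q × ∀ k, List (Γ k)) (c : Q × ∀ k, List (Γ k)) :
    Q × ∀ k, List (Γ k) :=
  ((μ c.1 fun k => (c.2 k).head?).1,
    fun k => (μ c.1 fun k => (c.2 k).head?).2 k ++ (c.2 k).tail)

variable [Fintype Q] [∀ k, Fintype (Γ k)]

/-- The vector that encodes a configuration: the state in coordinate `none`, the stack `k` in
coordinate `some k`. -/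
noncomputable def encode (c : Q × ∀ k, List (Γ k)) : Option K → ℤ
  | none => (Fintype.equivFin Q c.1 : ℕ)
  | some k => code (c.2 k)

theorem encode_injective : Injective (encode (Q := Q) (K := K) (Γ := Γ)) := by
  rintro ⟨q, S⟩ ⟨q', S'⟩ h
  have hq : q = q' := by simpa [encode, Fin.val_inj] using congrFun h none
  have hS : S = S' := funext fun k => code_injective (by simpa [encode] using congrFun h (some k))
  rw [hq, hS]

end Step

section Simulation

variable {Q K : Type} {Γ : K → Type} [Fintype Q] [Finite K] [∀ k, Fintype (Γ k)]
  (μ : Q → (∀ k, Option (Γ k)) → Q × ∀ k, List (Γ k))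

/-- The affine system that simulates a stack machine. -/
noncomputable def affineSystem : AffineSystem (Option K) where
  Rule := Q × ∀ k, Option (Γ k)
  finite_rule := inferInstance
  srcMul _ := fun
    | none => Fintype.card Q
    | some k => base (Γ k)
  srcOff r := fun
    | none => (Fintype.equivFin Q r.1 : ℕ)
    | some k => digit (r.2 k)
  tgtMul r := fun
    | none => Fintype.card Q
    | some k => base (Γ k) ^ ((μ r.1 r.2).2 k).length
  tgtOff r := fun
    | none => (Fintype.equivFin Q (μ r.1 r.2).1 : ℕ)
    | some k => code ((μ r.1 r.2).2 k)
  srcMul_ne_zero r i := by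
    have : Nonempty Q := ⟨r.1⟩
    cases i with
    | none => exact Nat.cast_ne_zero.2 Fintype.card_ne_zero
    | some k => exact Nat.cast_ne_zero.2 (Nat.succ_ne_zero _)
  tgtMul_ne_zero r i := by
    have : Nonempty Q := ⟨r.1⟩
    cases i with
    | none => exact Nat.cast_ne_zero.2 Fintype.card_ne_zero
    | some k => exact pow_ne_zero _ (Nat.cast_ne_zero.2 (Nat.succ_ne_zero _))

theorem affineSystem_step (c : Q × ∀ k, List (Γ k)) :
    (affineSystem μ).Step (encode c) (encode (step μ c)) := by
  refine ⟨(c.1, fun k => (c.2 k).head?), fun | none => 0 | some k => code (c.2 k).tail, ?_, ?_⟩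
  · ext (_ | k)
    · simp [affineSystem, encode]
    · simp [affineSystem, encode, code_eq (c.2 k)]
  · ext (_ | k)
    · simp [affineSystem, encode, step]
    · simp [affineSystem, encode, step, code_append]

theorem affineSystem_step_functional {a b c : Option K → ℤ} (hb : (affineSystem μ).Step a b)
    (hc : (affineSystem μ).Step a c) : b = c := by
  obtain ⟨r, u, hu, rfl⟩ := hb
  obtain ⟨r', u', hu', rfl⟩ := hc
  have h := hu.symm.trans hu'
  have hnone := eq_and_eq_of_mul_add_eq (Int.ofNat_lt.2 (Fin.isLt _)) (Int.ofNat_lt.2 (Fin.isLt _))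
    (congrFun h none)
  have hsome (k) := eq_and_eq_of_mul_add_eq (Int.ofNat_lt.2 (digit_lt _))
    (Int.ofNat_lt.2 (digit_lt _)) (congrFun h (some k))
  have hr : r = r' := Prod.ext ((Fintype.equivFin Q).injective (Fin.val_injective hnone.2))
    (funext fun k => digit_injective (hsome k).2)
  have hu : u = u' := funext fun
    | none => hnone.1
    | some k => (hsome k).1
  rw [hr, hu]

theorem eqvGen_affineSystem_iff {c h : Q × ∀ k, List (Γ k)} (hh : step μ h = h) :
    EqvGen (affineSystem μ).Step (encode c) (encode h) ↔ ∃ n, (step μ)^[n] c = h := by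
  constructor
  · intro H
    have hterm (a) (ha : (affineSystem μ).Step (encode h) a) : a = encode h :=
      affineSystem_step_functional μ ha (by simpa only [hh] using affineSystem_step μ h)
    have H' := reflTransGen_of_eqvGen_of_functional
      (r := (affineSystem μ).Step) (fun _ _ _ => affineSystem_step_functional μ) hterm H
    generalize hx : encode c = x at H'
    clear H
    induction H' using ReflTransGen.head_induction_on generalizing c with
    | refl => exact ⟨0, encode_injective hx⟩
    | head hab _ ih =>
      subst hx
      obtain ⟨n, hn⟩ := ih (affineSystem_step_functional μ (affineSystem_step μ c) hab)
      exact ⟨n + 1, hn⟩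
  · rintro ⟨n, rfl⟩
    clear hh
    induction n generalizing c with
    | zero => exact .refl _
    | succ n ih => exact .trans _ _ _ (.rel _ _ (affineSystem_step μ c)) ih

end Simulation

end StackMachine

namespace StackMachine

section TM2

open Turing Turing.TM2

variable {K : Type*} [DecidableEq K] {Γ : K → Type*} {Λ σ : Type*} (M : Λ → Stmt Γ Λ σ)

variable (Γ Λ σ) in
/-- A configuration of a `TM2` machine in the middle of a statement: what is left of the statement
(`none` after halting), the internal state and the stacks. -/
abbrev MicroCfg : Type _ := (Option (Stmt Γ Λ σ) × σ) × ∀ k, List (Γ k)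

/-- The execution of a single instruction of a `TM2` machine. -/
def microStep : MicroCfg Γ Λ σ → MicroCfg Γ Λ σ
  | ((none, v), S) => ((none, v), S)
  | ((some (.push k f q), v), S) => ((some q, v), update S k (f v :: S k))
  | ((some (.peek k f q), v), S) => ((some q, f v (S k).head?), S)
  | ((some (.pop k f q), v), S) => ((some q, f v (S k).head?), update S k (S k).tail)
  | ((some (.load f q), v), S) => ((some q, f v), S)
  | ((some (.branch f q₁ q₂), v), S) => ((some (cond (f v) q₁ q₂), v), S)
  | ((some (.goto f), v), S) => ((some (M (f v)), v), S)
  | ((some .halt, v), S) => ((none, v), S)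

/-- The stack machine that executes a `TM2` machine instruction by instruction. -/
def micro : Option (Stmt Γ Λ σ) × σ → (∀ k, Option (Γ k)) →
    (Option (Stmt Γ Λ σ) × σ) × ∀ k, List (Γ k)
  | (none, v), d => ((none, v), fun k => (d k).toList)
  | (some (.push k f q), v), d =>
    ((some q, v), update (fun k => (d k).toList) k (f v :: (d k).toList))
  | (some (.peek k f q), v), d => ((some q, f v (d k)), fun k => (d k).toList)
  | (some (.pop k f q), v), d => ((some q, f v (d k)), update (fun k => (d k).toList) k [])
  | (some (.load f q), v), d => ((some q, f v), fun k => (d k).toList)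
  | (some (.branch f q₁ q₂), v), d => ((some (cond (f v) q₁ q₂), v), fun k => (d k).toList)
  | (some (.goto f), v), d => ((some (M (f v)), v), fun k => (d k).toList)
  | (some .halt, v), d => ((none, v), fun k => (d k).toList)

theorem toList_head?_append_tail {α : Type*} (l : List α) : l.head?.toList ++ l.tail = l := by
  cases l <;> rfl

theorem update_append_tail (S : ∀ k, List (Γ k)) (k : K) (l : List (Γ k)) :
    (fun i => update (fun i => (S i).head?.toList) k l i ++ (S i).tail) =
      update S k (l ++ (S k).tail) := by
  ext1 i
  by_cases h : i = k
  · subst h; simp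
  · simp [h, toList_head?_append_tail]

theorem step_micro (c : MicroCfg Γ Λ σ) : step (micro M) c = microStep M c := by
  obtain ⟨⟨_ | q, v⟩, S⟩ := c
  · simp [step, micro, microStep, toList_head?_append_tail]
  · cases q <;>
      simp [step, micro, microStep, update_append_tail, toList_head?_append_tail]

/-- The configuration of the instruction-wise execution that corresponds to a `TM2`
configuration. -/
def ofCfg (c : Cfg Γ Λ σ) : MicroCfg Γ Λ σ := ((c.l.map M, c.var), c.stk)

/-- The result of running a `TM2` machine from the middle of a statement. -/
def outcome : MicroCfg Γ Λ σ → Part (Cfg Γ Λ σ)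
  | ((none, v), S) => StateTransition.eval (TM2.step M) ⟨none, v, S⟩
  | ((some q, v), S) => StateTransition.eval (TM2.step M) (stepAux q v S)

theorem outcome_some (l : Λ) (v : σ) (S : ∀ k, List (Γ k)) :
    outcome M ((some (M l), v), S) = StateTransition.eval (TM2.step M) ⟨some l, v, S⟩ :=
  (StateTransition.reaches_eval (f := TM2.step M) (a := ⟨some l, v, S⟩) (.single rfl)).symm

theorem outcome_ofCfg (c : Cfg Γ Λ σ) :
    outcome M (ofCfg M c) = StateTransition.eval (TM2.step M) c := by
  obtain ⟨_ | l, v, S⟩ := c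
  · rfl
  · exact outcome_some M l v S

theorem outcome_microStep (c : MicroCfg Γ Λ σ) : outcome M (microStep M c) = outcome M c := by
  obtain ⟨⟨_ | q, v⟩, S⟩ := c
  · rfl
  cases q with
  | branch f q₁ q₂ =>
    simp only [microStep, outcome, stepAux]
    cases f v <;> rfl
  | goto f => exact outcome_some M (f v) v S
  | _ => rfl

theorem exists_iterate_microStep (q : Stmt Γ Λ σ) (v : σ) (S : ∀ k, List (Γ k)) :
    ∃ n, (microStep M)^[n] ((some q, v), S) = ofCfg M (stepAux q v S) := by
  induction q generalizing v S with
  | push k f q ih => exact (ih v (update S k (f v :: S k))).imp' (· + 1) fun _ h => h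
  | peek k f q ih => exact (ih (f v (S k).head?) S).imp' (· + 1) fun _ h => h
  | pop k f q ih =>
    exact (ih (f v (S k).head?) (update S k (S k).tail)).imp' (· + 1) fun _ h => h
  | load f q ih => exact (ih (f v) S).imp' (· + 1) fun _ h => h
  | branch f q₁ q₂ ih₁ ih₂ =>
    simp only [stepAux]
    rcases h : f v
    · refine (ih₂ v S).imp' (· + 1) fun _ h' => ?_
      rw [iterate_succ_apply, microStep, h]
      exact h'
    · refine (ih₁ v S).imp' (· + 1) fun _ h' => ?_
      rw [iterate_succ_apply, microStep, h]
      exact h'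
  | goto f => exact ⟨1, rfl⟩
  | halt => exact ⟨1, rfl⟩

theorem exists_iterate_microStep_eq_iff (c : Cfg Γ Λ σ) (v : σ) (S : ∀ k, List (Γ k)) :
    (∃ n, (microStep M)^[n] (ofCfg M c) = ((none, v), S)) ↔
      ⟨none, v, S⟩ ∈ StateTransition.eval (TM2.step M) c := by
  constructor
  · rintro ⟨n, hn⟩
    have houtcome : outcome M ((microStep M)^[n] (ofCfg M c)) = outcome M (ofCfg M c) := by
      have hsemi : Semiconj (outcome M) (microStep M) id := outcome_microStep M
      rw [(hsemi.iterate_right n).eq, iterate_id, id]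
    rw [← outcome_ofCfg, ← houtcome, hn]
    exact StateTransition.mem_eval.2 ⟨.refl, rfl⟩
  · intro h
    replace h := (StateTransition.mem_eval.1 h).1
    induction h using ReflTransGen.head_induction_on with
    | refl => exact ⟨0, rfl⟩
    | @head a b hab _ ih =>
      obtain ⟨n, hn⟩ := ih
      obtain ⟨_ | l, w, T⟩ := a
      · exact absurd hab (by simp)
      · obtain ⟨m, hm⟩ := exists_iterate_microStep M (M l) w T
        obtain rfl : stepAux (M l) w T = b := by simpa using hab
        exact ⟨n + m, by rw [iterate_add_apply, ← hn, ← hm]; rfl⟩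

open scoped Classical in
theorem micro_mem_stmts [Inhabited Λ] {L : Finset Λ} (hL : Supports M L)
    {s : Option (Stmt Γ Λ σ) × σ} (d : ∀ k, Option (Γ k)) (hs : s.1 ∈ stmts M L) :
    (micro M s d).1.1 ∈ stmts M L := by
  obtain ⟨_ | q, v⟩ := s
  · exact hs
  have hsub : ∀ q' ∈ stmts₁ q, some q' ∈ stmts M L := fun q' h => stmts_trans h hs
  cases q with
  | branch f q₁ q₂ =>
    refine hsub _ ?_
    cases f v <;> simp [stmts₁, stmts₁_self]
  | goto f =>
    simp only [micro, stmts, Finset.some_mem_insertNone, Finset.mem_biUnion]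
    exact ⟨f v, stmts_supportsStmt hL hs v, stmts₁_self⟩
  | halt => simp [micro, stmts]
  | _ => exact hsub _ (by simp [stmts₁, stmts₁_self])

section Finite

variable {K : Type} [DecidableEq K] [Finite K] {Γ : K → Type} [∀ k, Fintype (Γ k)] {Λ σ : Type}
  [Inhabited Λ] [Finite σ]

theorem exists_affineSystem_eqvGen_iff_mem_eval (M : Λ → Stmt Γ Λ σ) {L : Finset Λ}
    (hL : Supports M L) {l : Λ} (hl : l ∈ L) (v w : σ) (T : ∀ k, List (Γ k)) :
    ∃ (A : AffineSystem (Option K)) (x : ℤ) (h : Option K → ℤ), ∀ S : ∀ k, List (Γ k),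
      EqvGen A.Step (fun i => i.elim x fun k => (code (S k) : ℤ)) h ↔
        ⟨none, w, T⟩ ∈ StateTransition.eval (TM2.step M) ⟨some l, v, S⟩ := by
  classical
  let Q := {s : Option (Stmt Γ Λ σ) × σ // s.1 ∈ stmts M L}
  have : Finite Q := Finite.of_injective
    (fun s : Q => ((⟨s.1.1, s.2⟩, s.1.2) : stmts M L × σ)) fun a b h => by
      simp only [Prod.mk.injEq, Subtype.mk.injEq] at h
      exact Subtype.ext (Prod.ext h.1 h.2)
  have : Fintype Q := Fintype.ofFinite Q
  let μ : Q → (∀ k, Option (Γ k)) → Q × ∀ k, List (Γ k) := fun s d =>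
    (⟨(micro M s.1 d).1, micro_mem_stmts M hL d s.2⟩, (micro M s.1 d).2)
  let π : Q × (∀ k, List (Γ k)) → MicroCfg Γ Λ σ := Prod.map Subtype.val id
  have hπ : Injective π := Subtype.val_injective.prodMap injective_id
  have hsemi : Semiconj π (step μ) (microStep M) := fun c => step_micro M (π c)
  have hmem : some (M l) ∈ stmts M L := by
    simp only [stmts, Finset.some_mem_insertNone, Finset.mem_biUnion]
    exact ⟨l, hl, stmts₁_self⟩
  let q₀ : Q := ⟨(some (M l), v), hmem⟩
  let h₀ : Q × ∀ k, List (Γ k) := (⟨(none, w), by simp [stmts]⟩, T)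
  have hh : step μ h₀ = h₀ := hπ (hsemi h₀)
  refine ⟨affineSystem μ, (Fintype.equivFin Q q₀ : ℕ), encode h₀, fun S => ?_⟩
  have henc : (fun i => i.elim ((Fintype.equivFin Q q₀ : ℕ) : ℤ) fun k => (code (S k) : ℤ)) =
      encode (q₀, S) := by
    ext (_ | k) <;> rfl
  rw [henc, eqvGen_affineSystem_iff μ hh, ← exists_iterate_microStep_eq_iff]
  refine exists_congr fun n => ?_
  rw [← hπ.eq_iff, (hsemi.iterate_right n).eq]
  rfl

end Finite

end TM2

end StackMachine

/-! ### Undecidability of connectedness in affine systems -/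

theorem computable_of_bit {α : Type*} [Primcodable α] {f : ℕ → α} (g : Bool → α → α)
    (hg : Computable₂ g) (hf : ∀ b n, Nat.bit b n ≠ 0 → f (Nat.bit b n) = g b (f n)) :
    Computable f := by
  let G : Unit → List α → Option α := fun _ l => Nat.casesOn l.length (some (f 0)) fun m =>
    l[(m + 1).div2]?.map (g (m + 1).bodd)
  have hG : Computable₂ G := by
    refine Computable.nat_casesOn (Computable.list_length.comp .snd) (.const _) ?_
    have hsucc : Computable fun p : (Unit × List α) × ℕ => p.2 + 1 := Computable.succ.comp .snd
    refine Computable.option_map (Computable.list_getElem?.comp (Computable.snd.comp .fst)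
      (Primrec.nat_div2.to_comp.comp hsucc)) (hg.comp ?_ .snd)
    exact Primrec.nat_bodd.to_comp.comp (hsucc.comp .fst)
  have hGf (u : Unit) (n : ℕ) : G u ((List.range n).map f) = some (f n) := by
    rcases n with _ | m
    · rfl
    have hlt : (m + 1).div2 < m + 1 := Nat.binaryRec_decreasing m.succ_ne_zero
    have hbit := Nat.bit_bodd_div2 (m + 1)
    have hfm := hf (m + 1).bodd (m + 1).div2 (hbit.trans_ne m.succ_ne_zero)
    rw [hbit] at hfm
    simp only [G, List.length_map, List.length_range, List.getElem?_map, List.getElem?_range hlt,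
      Option.map_some, hfm]
  exact (Computable.nat_strong_rec (fun _ : Unit => f) hG hGf).comp (.const ()) .id

section

open Turing Turing.PartrecToTM2 StackMachine

instance : Fintype K' :=
  ⟨{.main, .rev, .aux, .stack}, fun k => by cases k <;> simp⟩

theorem trNat_bit (b : Bool) (n : ℕ) (h : Nat.bit b n ≠ 0) :
    trNat (Nat.bit b n) = cond b Γ'.bit1 Γ'.bit0 :: trNat n := by
  rw [trNat, trNat, ← Num.ofNat'_eq, ← Num.ofNat'_eq, Num.ofNat'_bit]
  cases b with
  | true => cases Num.ofNat' n <;> rfl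
  | false =>
    rcases hm : Num.ofNat' n with _ | p
    · have hn : n = 0 := by
        rw [Num.ofNat'_eq] at hm
        simpa using congrArg (fun m : Num => (m : ℕ)) hm
      simp [hn] at h
    · rfl

theorem computable_code_trList : Computable fun n : ℕ => code (trList [n]) := by
  refine computable_of_bit
    (fun b m => digit (some (cond b Γ'.bit1 Γ'.bit0)) + base Γ' * m) ?_ fun b n h => ?_
  · exact (Primrec.nat_add.comp
      ((Primrec.dom_finite fun b => digit (some (cond b Γ'.bit1 Γ'.bit0))).comp .fst)
      (Primrec.nat_mul.comp (.const _) .snd)).to_comp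
  · rw [trList, trNat_bit b n h]
    rfl

theorem exists_code_eval_eq_map_zero :
    ∃ c : ToPartrec.Code, ∀ n : ℕ,
      c.eval [n] = (Nat.Partrec.Code.eval (Denumerable.ofNat _ n) 0).map fun _ => [0] := by
  have hpartrec : Partrec fun n : ℕ =>
      (Nat.Partrec.Code.eval (Denumerable.ofNat _ n) 0).map fun _ => 0 :=
    (Nat.Partrec.Code.eval_part.comp (.ofNat _) (.const 0)).map (Computable.const 0).to₂
  obtain ⟨c, hc⟩ := ToPartrec.Code.exists_code (Nat.Partrec'.part_iff₁.2 hpartrec)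
  refine ⟨c, fun n => (hc ⟨[n], rfl⟩).trans ?_⟩
  exact Part.map_map _ _ _

theorem not_computablePred_dom_eval :
    ¬ ComputablePred fun n : ℕ => (Nat.Partrec.Code.eval (Denumerable.ofNat _ n) 0).Dom := fun H =>
  ComputablePred.halting_problem 0 <| ComputablePred.computable_of_manyOneReducible
    ⟨Encodable.encode, Computable.encode, fun c => by rw [Denumerable.ofNat_encode]⟩ H

theorem exists_affineSystem_not_computablePred :
    ∃ (I : Type) (_ : Finite I) (A : AffineSystem I) (a b h : I → ℤ),
      ¬ ComputablePred fun m : ℕ => EqvGen A.Step (a + (m : ℤ) • b) h := by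
  classical
  obtain ⟨c, hc⟩ := exists_code_eval_eq_map_zero
  let : Inhabited Λ' := ⟨trNormal c .halt⟩
  have hsupp := tr_supports c .halt
  obtain ⟨A, x, h, hA⟩ := exists_affineSystem_eqvGen_iff_mem_eval tr hsupp hsupp.1 none none
    (K'.elim (trList [0]) [] [] [])
  let a : Option K' → ℤ := fun i => i.elim x fun _ => 0
  let b : Option K' → ℤ := Pi.single (some .main) 1
  refine ⟨Option K', inferInstance, A, a, b, h, fun H => not_computablePred_dom_eval ?_⟩
  refine (ComputablePred.computable_of_manyOneReducible
    ⟨_, computable_code_trList, fun _ => Iff.rfl⟩ H).of_eq fun n => ?_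
  have hpoint : a + ((code (trList [n]) : ℕ) : ℤ) • b =
      fun i => i.elim x fun k => (code (K'.elim (trList [n]) [] [] [] k) : ℤ) := by
    ext (_ | k)
    · simp [a, b]
    · cases k <;> simp [a, b, code_nil, K'.elim]
  have hhalt : halt [0] ∈ StateTransition.eval (TM2.step tr) (init c [n]) ↔
      (Nat.Partrec.Code.eval (Denumerable.ofNat _ n) 0).Dom := by
    rw [tr_eval, hc, Part.map_eq_map, Part.map_map, Part.dom_iff_mem]
    exact (Part.mem_map_iff _).trans (by simp only [comp_apply, and_true])
  rw [← hhalt, hpoint]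
  exact hA _

end

/-! ### Simultaneous HNN extensions -/

theorem exists_conj_eq_of_ker_eq {G D : Type*} [Group G] [Group D] {a b : D →* G}
    (hab : a.ker = b.ker) :
    ∃ (A B : Subgroup G) (φ : A ≃* B), ∀ d,
      (HNNExtension.t : HNNExtension G A B φ) * HNNExtension.of (a d) * HNNExtension.t⁻¹ =
        HNNExtension.of (b d) := by
  let φ : a.range ≃* b.range := (QuotientGroup.quotientKerEquivRange a).symm.trans <|
    (QuotientGroup.quotientMulEquivOfEq hab).trans <| QuotientGroup.quotientKerEquivRange b
  have hφ (d : D) : φ (a.rangeRestrict d) = b.rangeRestrict d := by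
    have hd : a.rangeRestrict d = QuotientGroup.quotientKerEquivRange a (d : D ⧸ a.ker) := rfl
    simp only [φ, hd, MulEquiv.trans_apply, MulEquiv.symm_apply_apply]
    rfl
  refine ⟨a.range, b.range, φ, fun d => ?_⟩
  have h := HNNExtension.equiv_eq_conj (φ := φ) (a.rangeRestrict d)
  rw [hφ] at h
  exact h.symm

theorem exists_forall_conj_eq_of_ker_eq {G : Type u} [Group G] {J : Type*} [Finite J]
    {D : J → Type*} [∀ j, Group (D j)] (a b : ∀ j, D j →* G) (hab : ∀ j, (a j).ker = (b j).ker) :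
    ∃ (H : Type u) (_ : Group H) (ι : G →* H) (s : J → H), Injective ι ∧
      ∀ j d, s j * ι (a j d) * (s j)⁻¹ = ι (b j d) := by
  classical
  cases nonempty_fintype J
  suffices key : ∀ S : Finset J, ∃ (H : Type u) (_ : Group H) (ι : G →* H) (s : J → H),
      Injective ι ∧ ∀ j ∈ S, ∀ d, s j * ι (a j d) * (s j)⁻¹ = ι (b j d) by
    obtain ⟨H, _, ι, s, hι, hs⟩ := key Finset.univ
    exact ⟨H, inferInstance, ι, s, hι, fun j => hs j (Finset.mem_univ j)⟩
  intro S
  induction S using Finset.induction_on with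
  | empty => exact ⟨G, inferInstance, MonoidHom.id G, 1, injective_id, by simp⟩
  | insert j S hj ih =>
    obtain ⟨H, _, ι, s, hι, hs⟩ := ih
    have hker : (ι.comp (a j)).ker = (ι.comp (b j)).ker := by
      rw [MonoidHom.ker_comp_of_injective _ _ hι, MonoidHom.ker_comp_of_injective _ _ hι, hab]
    obtain ⟨A, B, φ, hφ⟩ := exists_conj_eq_of_ker_eq hker
    refine ⟨HNNExtension H A B φ, inferInstance, HNNExtension.of.comp ι,
      Function.update (fun i => HNNExtension.of (s i)) j HNNExtension.t,
      (HNNExtension.of_injective φ).comp hι, fun i hi d => ?_⟩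
    rcases Finset.mem_insert.1 hi with rfl | hi
    · simpa using hφ d
    · rw [Function.update_of_ne (ne_of_mem_of_not_mem hi hj)]
      simp only [MonoidHom.comp_apply, ← map_mul, ← map_inv, hs i hi]

theorem exists_forall_conj_eq_of_not_isOfFinOrder {G : Type u} [Group G] {J : Type*} [Finite J]
    {a : G} {b : J → G} (ha : ¬ IsOfFinOrder a) (hb : ∀ j, ¬ IsOfFinOrder (b j)) :
    ∃ (H : Type u) (_ : Group H) (ι : G →* H) (s : J → H), Injective ι ∧
      ∀ j, s j * ι a * (s j)⁻¹ = ι (b j) := by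
  have ker_eq_bot {g : G} (hg : ¬ IsOfFinOrder g) : (zpowersHom G g).ker = ⊥ :=
    (MonoidHom.ker_eq_bot_iff _).2 fun _ _ h =>
      Multiplicative.toAdd.injective (injective_zpow_iff_not_isOfFinOrder.2 hg h)
  obtain ⟨H, _, ι, s, hι, hs⟩ := exists_forall_conj_eq_of_ker_eq
    (fun _ : J => zpowersHom G a) (fun j => zpowersHom G (b j))
    fun j => (ker_eq_bot ha).trans (ker_eq_bot (hb j)).symm
  exact ⟨H, inferInstance, ι, s, hι, fun j => by simpa using hs j (.ofAdd 1)⟩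

/-! ### Products of powers -/

section vecProd

variable {I G H : Type*} [Fintype I] [Group G] [Group H]

/-- The product of the powers `x i ^ v i`, taken in an arbitrary fixed order. -/
noncomputable def vecProd (x : I → G) (v : I → ℤ) : G :=
  (Finset.univ.toList.map fun i => x i ^ v i).prod

theorem map_vecProd (f : G →* H) (x : I → G) (v : I → ℤ) :
    f (vecProd x v) = vecProd (fun i => f (x i)) v := by
  simp [vecProd, map_list_prod, Function.comp_def]

theorem vecProd_zpow (x : I → G) (m v : I → ℤ) :
    vecProd (fun i => x i ^ m i) v = vecProd x (m * v) := by
  simp [vecProd, zpow_mul]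

theorem vecProd_add {x : I → G} (hx : ∀ i j, Commute (x i) (x j)) (v w : I → ℤ) :
    vecProd x (v + w) = vecProd x v * vecProd x w := by
  unfold vecProd
  induction (Finset.univ : Finset I).toList with
  | nil => simp
  | cons i l ih =>
    have hc : Commute (x i ^ w i) (l.map fun j => x j ^ v j).prod :=
      Commute.list_prod_right _ _ fun y hy => by
        obtain ⟨j, -, rfl⟩ := List.mem_map.1 hy
        exact (hx i j).zpow_zpow _ _
    rw [List.map_cons, List.prod_cons, ih, Pi.add_apply, zpow_add]
    simp only [List.map_cons, List.prod_cons, mul_assoc, hc.left_comm]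

end vecProd

section shift

variable {I : Type*} (Z : Type*)

/-- The action of the vectors on the first factor by translation. -/
def shift : Multiplicative (I → ℤ) →* Equiv.Perm ((I → ℤ) × Z) where
  toFun v := (Equiv.addRight v.toAdd).prodCongr (Equiv.refl Z)
  map_one' := by ext <;> simp
  map_mul' v w := by ext <;> simp [add_comm, add_left_comm]

variable {Z}

theorem shift_apply (v u : I → ℤ) (z : Z) : shift Z (.ofAdd v) (u, z) = (u + v, z) := rfl

variable [DecidableEq I]

theorem shift_single_zpow (i : I) (n : ℤ) (u : I → ℤ) (z : Z) :
    (shift Z (.ofAdd (Pi.single i 1)) ^ n) (u, z) = (u + Pi.single i n, z) := by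
  rw [← map_zpow, ← ofAdd_zsmul, shift_apply, ← Pi.single_smul]
  simp

variable (Z) in
theorem vecProd_shift [Fintype I] (v : I → ℤ) :
    vecProd (fun i => shift Z (.ofAdd (Pi.single i 1))) v = shift Z (.ofAdd v) := by
  have hv : ∑ i, v i • (Pi.single i 1 : I → ℤ) = v := by
    simpa [← Pi.single_smul] using Finset.univ_sum_single v
  rw [← map_vecProd, vecProd, Finset.prod_map_toList]
  simp only [← ofAdd_zsmul, ← ofAdd_sum, hv]

theorem mul_add_piSingle_one (m u : I → ℤ) (i : I) :
    m * (u + Pi.single i 1) = m * u + Pi.single i (m i) := by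
  rw [mul_add, ← Pi.single_mul_right, mul_one]

end shift

/-! ### Vectors in groups -/

theorem freeGroup_hom_equivariant {X A B : Type*} (φ : FreeGroup X →* Equiv.Perm A)
    (ψ : FreeGroup X →* Equiv.Perm B) (F : A → B)
    (h : ∀ x a, F (φ (FreeGroup.of x) a) = ψ (FreeGroup.of x) (F a)) (w : FreeGroup X) (a : A) :
    F (φ w a) = ψ w (F a) := by
  induction w using FreeGroup.induction_on generalizing a with
  | C1 => simp
  | of x => exact h x a
  | inv_of x ih =>
    rw [map_inv, map_inv, Equiv.Perm.eq_inv_iff_eq, ← ih, ← Equiv.Perm.mul_apply, mul_inv_cancel,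
      Equiv.Perm.one_apply]
  | mul u v hu hv =>
    rw [map_mul, map_mul, Equiv.Perm.mul_apply, Equiv.Perm.mul_apply, hu, hv]

/-- The symbols in which the vectors `I → ℤ` and sets of vectors are expressed: `v` is represented
by the conjugate `mark v` of `t`, and membership of `v` in a set by the commutation of `k` with
`mark v`. -/
inductive BaseSymbol (I : Type*)
  | x (i : I)
  | t
  | k

namespace BaseSymbol

open FreeGroup (of)

variable {I : Type*}

instance [Finite I] : Finite (BaseSymbol I) :=
  Finite.of_surjective (fun | some (some i) => x i | some none => t | none => k :
    Option (Option I) → BaseSymbol I) fun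
    | x i => ⟨some (some i), rfl⟩
    | t => ⟨some none, rfl⟩
    | k => ⟨none, rfl⟩

section mark

variable [Fintype I] {G : Type*} [Group G] {f : FreeGroup (BaseSymbol I) →* G}

/-- The translation by a vector. -/
noncomputable def translation (v : I → ℤ) : FreeGroup (BaseSymbol I) :=
  vecProd (fun i => of (x i)) v

/-- The conjugate of `t` by the translation by a vector. -/
noncomputable def mark (v : I → ℤ) : FreeGroup (BaseSymbol I) :=
  translation v * of t * (translation v)⁻¹

/-- The endomorphism that multiplies the translations by `m` and moves the origin to `p`. -/
noncomputable def rescale (m p : I → ℤ) : FreeGroup (BaseSymbol I) →* FreeGroup (BaseSymbol I) :=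
  FreeGroup.lift fun
    | x i => of (x i) ^ m i
    | t => mark p
    | k => of k

theorem rescale_x (m p : I → ℤ) (i : I) : rescale m p (of (x i)) = of (x i) ^ m i := by
  simp [rescale]

theorem rescale_t (m p : I → ℤ) : rescale m p (of t) = mark p := by
  simp [rescale]

theorem rescale_k (m p : I → ℤ) : rescale m p (of k) = of k := by
  simp [rescale]

theorem map_translation_add (hf : ∀ i j, Commute (f (of (x i))) (f (of (x j)))) (u v : I → ℤ) :
    f (translation (u + v)) = f (translation u) * f (translation v) := by
  simp only [translation, map_vecProd, vecProd_add hf]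

theorem rescale_translation (m p u : I → ℤ) :
    rescale m p (translation u) = translation (m * u) := by
  simp only [translation, map_vecProd, rescale_x, vecProd_zpow]

theorem map_rescale_mark (hf : ∀ i j, Commute (f (of (x i))) (f (of (x j)))) (m p u : I → ℤ) :
    f (rescale m p (mark u)) = f (mark (m * u + p)) := by
  simp only [mark, map_mul, map_inv, rescale_translation, rescale_t, map_translation_add hf,
    mul_inv_rev, mul_assoc]

end mark

variable [DecidableEq I] (C : Set (I → ℤ))

/-- The action on lines `ℚ` over the vectors in which the symbols `x i` act as translations, `t`
adds `1` on the line over the origin, and `k` doubles the lines over the vectors outside `C`. -/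
noncomputable def lineRep : FreeGroup (BaseSymbol I) →* Equiv.Perm ((I → ℤ) × ℚ) :=
  open scoped Classical in
  FreeGroup.lift fun
    | x i => shift ℚ (.ofAdd (Pi.single i 1))
    | t => (Equiv.refl _).prodShear fun u => if u = 0 then Equiv.addRight 1 else Equiv.refl ℚ
    | k => (Equiv.refl _).prodShear fun u =>
        if u ∈ C then Equiv.refl ℚ else Equiv.mulRight₀ 2 two_ne_zero

/-- The lamplighter action, in which the symbols `x i` act as translations, `t` acts trivially and
`k` turns the lamp at the current position. -/
noncomputable def lampRep :
    FreeGroup (BaseSymbol I) →* Equiv.Perm ((I → ℤ) × ((I → ℤ) →₀ ℤ)) :=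
  FreeGroup.lift fun
    | x i => shift _ (.ofAdd (Pi.single i 1))
    | t => 1
    | k => (Equiv.refl _).prodShear fun u => Equiv.addRight (Finsupp.single u 1)

theorem lampRep_x (i : I) : lampRep (of (x i)) = shift _ (.ofAdd (Pi.single i 1)) := by
  simp [lampRep]

theorem lampRep_t : lampRep (of (t : BaseSymbol I)) = 1 := by
  simp [lampRep]

theorem lampRep_k (u : I → ℤ) (f : (I → ℤ) →₀ ℤ) :
    lampRep (of k) (u, f) = (u, f + Finsupp.single u 1) := by
  simp [lampRep]

theorem lineRep_x (i : I) : lineRep C (of (x i)) = shift ℚ (.ofAdd (Pi.single i 1)) := by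
  simp [lineRep]

open scoped Classical in
theorem lineRep_t (u : I → ℤ) (q : ℚ) :
    lineRep C (of t) (u, q) = (u, if u = 0 then q + 1 else q) := by
  simp only [lineRep, FreeGroup.lift_apply_of, Equiv.prodShear_apply, Equiv.refl_apply]
  split_ifs <;> rfl

open scoped Classical in
theorem lineRep_k (u : I → ℤ) (q : ℚ) :
    lineRep C (of k) (u, q) = (u, if u ∈ C then q else q * 2) := by
  simp only [lineRep, FreeGroup.lift_apply_of, Equiv.prodShear_apply, Equiv.refl_apply]
  split_ifs <;> rfl

/-- The product of the line action and the lamplighter action. The line action distinguishes the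
vectors in `C` from the others; the lamps make the kernel insensitive to the index of the lattice
of rescaled vectors. -/
noncomputable def baseRep : FreeGroup (BaseSymbol I) →*
    Equiv.Perm ((I → ℤ) × ℚ) × Equiv.Perm ((I → ℤ) × ((I → ℤ) →₀ ℤ)) :=
  (lineRep C).prod lampRep

theorem mem_ker_baseRep {w : FreeGroup (BaseSymbol I)} :
    w ∈ (baseRep C).ker ↔ (∀ z, lineRep C w z = z) ∧ ∀ z, lampRep w z = z := by
  simp only [baseRep, MonoidHom.mem_ker, MonoidHom.prod_apply, Prod.mk_eq_one, Equiv.Perm.ext_iff,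
    Equiv.Perm.one_apply]

theorem commute_baseRep_x (i j : I) : Commute (baseRep C (of (x i))) (baseRep C (of (x j))) := by
  refine Prod.commute_iff.2 ⟨?_, ?_⟩ <;>
    simp only [baseRep, MonoidHom.prod_apply, lineRep_x, lampRep_x] <;>
    exact (Commute.all _ _).map _

theorem not_isOfFinOrder_baseRep_of (s : BaseSymbol I) : ¬ IsOfFinOrder (baseRep C (of s)) := by
  suffices key : ∀ n : ℕ, baseRep C (of s) ^ n = 1 → n = 0 by
    rw [isOfFinOrder_iff_pow_eq_one]
    exact fun ⟨n, hn, h⟩ => hn.ne' (key n h)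
  intro n h
  have hline : (lineRep C (of s) ^ n) (0, 0) = (0, 0) := congrArg (fun g => g.1 (0, 0)) h
  have hlamp : (lampRep (of s) ^ n) (0, 0) = (0, 0) := congrArg (fun g => g.2 (0, 0)) h
  cases s with
  | x i =>
    rw [lineRep_x, ← zpow_natCast, shift_single_zpow] at hline
    simpa using congrFun (congrArg Prod.fst hline) i
  | t =>
    have hpow : (lineRep C (of t) ^ n) (0, 0) = (0, (n : ℚ)) := by
      clear h hline hlamp
      induction n with
      | zero => simp
      | succ n ih => rw [pow_succ', Equiv.Perm.mul_apply, ih, lineRep_t]; simp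
    simpa [hline, eq_comm] using congrArg Prod.snd hpow
  | k =>
    have hpow : (lampRep (of (k : BaseSymbol I)) ^ n) (0, 0) = (0, Finsupp.single 0 (n : ℤ)) := by
      clear h hline hlamp
      induction n with
      | zero => simp
      | succ n ih =>
        rw [pow_succ', Equiv.Perm.mul_apply, ih, lampRep_k, ← Finsupp.single_add]
        simp
    simpa [hlamp, eq_comm] using congrArg Prod.snd hpow

variable [Fintype I]

theorem lampRep_mark (v : I → ℤ) : lampRep (mark v) = 1 := by
  simp [mark, lampRep_t]

theorem lineRep_mark (v u : I → ℤ) (q : ℚ) :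
    lineRep C (mark v) (u, q) = (u, if u = v then q + 1 else q) := by
  have htrans : lineRep C (translation v) = shift ℚ (.ofAdd v) := by
    rw [translation, map_vecProd]
    simp only [lineRep_x, vecProd_shift]
  rw [mark, map_mul, map_mul, map_inv, htrans, ← map_inv, ← ofAdd_neg]
  simp only [Equiv.Perm.mul_apply, shift_apply, lineRep_t, ← sub_eq_add_neg, sub_eq_zero,
    sub_add_cancel]

section rescale

variable {m p : I → ℤ} (w : FreeGroup (BaseSymbol I))

theorem lineRep_rescale_apply_mul_add (hm : ∀ i, m i ≠ 0) (u : I → ℤ) (q : ℚ) :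
    lineRep C (rescale m p w) (m * u + p, q) =
      (m * (lineRep {u | m * u + p ∈ C} w (u, q)).1 + p,
        (lineRep {u | m * u + p ∈ C} w (u, q)).2) := by
  refine (freeGroup_hom_equivariant (lineRep {u | m * u + p ∈ C}) ((lineRep C).comp (rescale m p))
    (fun z => (m * z.1 + p, z.2)) ?_ w (u, q)).symm
  rintro (i | _ | _) ⟨u, q⟩ <;> rw [MonoidHom.comp_apply]
  · simp only [rescale_x, lineRep_x, shift_apply, map_zpow, shift_single_zpow,
      mul_add_piSingle_one, add_right_comm]
  · have hu : m * u = 0 ↔ u = 0 := by simp [funext_iff, hm]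
    simp only [rescale_t, lineRep_mark, lineRep_t, add_eq_right, hu]
    congr
  · simp only [rescale_k, lineRep_k]
    rfl

theorem lampRep_rescale (a u : I → ℤ) (f g : (I → ℤ) →₀ ℤ) :
    lampRep (rescale m p w) (a + m * u, g + f.mapDomain fun z => a + m * z) =
      (a + m * (lampRep w (u, f)).1,
        g + (lampRep w (u, f)).2.mapDomain fun z => a + m * z) := by
  refine (freeGroup_hom_equivariant lampRep (lampRep.comp (rescale m p))
    (fun z => (a + m * z.1, g + z.2.mapDomain fun z => a + m * z)) ?_ w (u, f)).symm
  rintro (i | _ | _) ⟨u, f⟩ <;> rw [MonoidHom.comp_apply]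
  · simp only [rescale_x, lampRep_x, shift_apply, map_zpow, shift_single_zpow,
      mul_add_piSingle_one, add_assoc]
  · simp only [rescale_t, lampRep_mark, lampRep_t, Equiv.Perm.one_apply]
  · simp only [rescale_k, lampRep_k, Finsupp.mapDomain_add, Finsupp.mapDomain_single, add_assoc]

-- Over a coset of the vectors `m * u` that misses `p`, the line action only sees the lamps.
open scoped Classical in
theorem lineRep_rescale_apply_of_forall_ne {a : I → ℤ} (ha : ∀ u, a + m * u ≠ p) (q : ℚ) :
    lineRep C (rescale m p w) (a, q) =
      (a + m * (lampRep w (0, 0)).1,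
        q * 2 ^ ((lampRep w (0, 0)).2.sum fun z n => if a + m * z ∈ C then 0 else n)) := by
  suffices key : ∀ x z, _ = _ by
    simpa using (freeGroup_hom_equivariant lampRep ((lineRep C).comp (rescale m p))
      (fun z => (a + m * z.1, q * 2 ^ (z.2.sum fun z n => if a + m * z ∈ C then 0 else n)))
      key w (0, 0)).symm
  rintro (i | _ | _) ⟨u, f⟩ <;> rw [MonoidHom.comp_apply]
  · simp only [rescale_x, lampRep_x, lineRep_x, shift_apply, map_zpow, shift_single_zpow,
      mul_add_piSingle_one, add_assoc]
  · simp only [rescale_t, lineRep_mark, lampRep_t, if_neg (ha u), Equiv.Perm.one_apply]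
  · simp only [rescale_k, lineRep_k, lampRep_k]
    rw [Finsupp.sum_add_index' (by simp) (by intro z n n'; split_ifs <;> simp),
      Finsupp.sum_single_index (by simp), zpow_add₀ two_ne_zero, ← mul_assoc]
    split_ifs <;> simp

end rescale

section ker

variable {m : I → ℤ} (p : I → ℤ)

theorem ker_baseRep_comp_rescale_le (hm : ∀ i, m i ≠ 0) :
    ((baseRep C).comp (rescale m p)).ker ≤ (baseRep {u | m * u + p ∈ C}).ker := by
  have hinj : Injective fun u : I → ℤ => m * u := fun _ _ h => funext fun i =>
    mul_left_cancel₀ (hm i) (congrFun h i)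
  intro w hw
  obtain ⟨hline, hlamp⟩ := (mem_ker_baseRep C).1 hw
  refine (mem_ker_baseRep _).2 ⟨fun ⟨u, q⟩ => ?_, fun ⟨u, f⟩ => ?_⟩
  · have h := lineRep_rescale_apply_mul_add (p := p) C w hm u q
    rw [hline, Prod.mk.injEq, add_left_inj] at h
    exact Prod.ext (hinj h.1).symm h.2.symm
  · have h := lampRep_rescale (m := m) (p := p) w 0 u f 0
    simp only [hlamp, zero_add, Prod.mk.injEq] at h
    exact Prod.ext (hinj h.1).symm (Finsupp.mapDomain_injective hinj h.2).symm

theorem le_ker_baseRep_comp_rescale (hm : ∀ i, m i ≠ 0) :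
    (baseRep {u | m * u + p ∈ C}).ker ≤ ((baseRep C).comp (rescale m p)).ker := by
  intro w hw
  obtain ⟨hline, hlamp⟩ := (mem_ker_baseRep _).1 hw
  refine (mem_ker_baseRep C).2 ⟨fun ⟨a, q⟩ => ?_, fun ⟨a, g⟩ => ?_⟩
  · by_cases ha : ∃ u, m * u + p = a
    · obtain ⟨u, rfl⟩ := ha
      rw [lineRep_rescale_apply_mul_add C w hm, hline]
    · rw [lineRep_rescale_apply_of_forall_ne C w, hlamp]
      · simp
      · rintro u rfl
        exact ha ⟨-u, by ring⟩
  · simpa [hlamp] using lampRep_rescale (m := m) (p := p) w a 0 0 g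

theorem ker_baseRep_comp_rescale (hm : ∀ i, m i ≠ 0) :
    ((baseRep C).comp (rescale m p)).ker = (baseRep {u | m * u + p ∈ C}).ker :=
  (ker_baseRep_comp_rescale_le C p hm).antisymm (le_ker_baseRep_comp_rescale C p hm)

end ker

theorem commute_baseRep_k_mark {v : I → ℤ} (hv : v ∈ C) :
    Commute (baseRep C (of k)) (baseRep C (mark v)) := by
  refine Prod.commute_iff.2 ⟨?_, ?_⟩
  · simp only [baseRep, MonoidHom.prod_apply]
    refine Equiv.ext fun ⟨u, q⟩ => ?_
    simp only [Equiv.Perm.mul_apply, lineRep_k, lineRep_mark]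
    split_ifs <;> simp_all
  · simp [baseRep, lampRep_mark]

theorem baseRep_k_conj_mark {v : I → ℤ} (hv : v ∉ C) :
    baseRep C (of k) * baseRep C (mark v) * (baseRep C (of k))⁻¹ = baseRep C (mark v) ^ 2 := by
  rw [mul_inv_eq_iff_eq_mul]
  refine Prod.ext ?_ ?_
  · simp only [baseRep, MonoidHom.prod_apply, Prod.fst_mul, sq]
    refine Equiv.ext fun ⟨u, q⟩ => ?_
    simp only [Equiv.Perm.mul_apply, lineRep_k, lineRep_mark]
    by_cases huv : u = v
    · subst huv
      simp only [if_true, if_neg hv, Prod.mk.injEq, true_and]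
      ring
    · simp [huv]
  · simp [baseRep, lampRep_mark]

end BaseSymbol

/-! ### The groups of an affine system -/

/-- The relator that equates `g` and `h`. -/
def relator {G : Type*} [Group G] (g h : G) : G := g * h⁻¹

namespace AffineSystem

open FreeGroup (of)

open BaseSymbol

/-- The generators of the group of an affine system: the base symbols, a stable letter for each
rule, and for each base symbol an element that conjugates `t` to it. -/
inductive Gen {I : Type u} (A : AffineSystem I)
  | base (s : BaseSymbol I)
  | rule (r : A.Rule)
  | conj (s : BaseSymbol I)

variable {I : Type u} (A : AffineSystem I)

instance [Finite I] : Finite A.Gen :=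
  Finite.of_surjective (α := BaseSymbol I ⊕ A.Rule ⊕ BaseSymbol I)
    (fun | .inl s => .base s | .inr (.inl r) => .rule r | .inr (.inr s) => .conj s) fun
    | .base s => ⟨.inl s, rfl⟩
    | .rule r => ⟨.inr (.inl r), rfl⟩
    | .conj s => ⟨.inr (.inr s), rfl⟩

/-- The inclusion of the words in the base symbols. -/
def baseHom : FreeGroup (BaseSymbol I) →* FreeGroup A.Gen := FreeGroup.map .base

theorem baseHom_of (s : BaseSymbol I) : A.baseHom (of s) = of (.base s) := FreeGroup.map.of

/-- The relators that make the base symbols trivial. -/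
def baseRels : Set (FreeGroup A.Gen) := of '' Set.range .base

theorem finite_baseRels [Finite I] : A.baseRels.Finite :=
  (Set.finite_range _).image _

theorem normalClosure_baseRels_le {N : Subgroup (FreeGroup A.Gen)}
    (h : ∀ s, of (.base s) ∈ N) [N.Normal] : Subgroup.normalClosure A.baseRels ≤ N := by
  refine Subgroup.normalClosure_le_normal ?_
  rintro _ ⟨_, ⟨s, rfl⟩, rfl⟩
  exact h s

variable [Fintype I]

/-- The relators shared by the groups of an affine system with distinguished vector `h`: the
translations commute, the stable letter of a rule `α u + p ↦ β u + q` conjugates the rescaling by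
`α` and `p` to the rescaling by `β` and `q`, the symbol `k` commutes with `mark h`, and the base
symbols are conjugate to `t`. -/
def fixedRels (h : I → ℤ) : Set (FreeGroup A.Gen) :=
  (Set.range fun p : I × I =>
    A.baseHom (relator (of (x p.1) * of (x p.2)) (of (x p.2) * of (x p.1)))) ∪
  (Set.range fun p : A.Rule × BaseSymbol I => relator
    (of (.rule p.1) * A.baseHom (rescale (A.srcMul p.1) (A.srcOff p.1) (of p.2)) *
      (of (.rule p.1))⁻¹)
    (A.baseHom (rescale (A.tgtMul p.1) (A.tgtOff p.1) (of p.2)))) ∪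
  {A.baseHom (relator (of k * mark h) (mark h * of k))} ∪
  Set.range fun s : BaseSymbol I =>
    relator (of (.conj s) * of (.base t) * (of (.conj s))⁻¹) (of (.base s))

theorem finite_fixedRels (h : I → ℤ) : (A.fixedRels h).Finite := by
  unfold fixedRels
  exact Set.toFinite _

/-- The relator that forces `k` to square `mark v`. -/
noncomputable def squareRel (v : I → ℤ) : FreeGroup (BaseSymbol I) :=
  relator (of k * mark v * (of k)⁻¹) (mark v ^ 2)

/-- The relators of the group of an affine system with distinguished vectors `v` and `h`. -/
def rels (v h : I → ℤ) : Set (FreeGroup A.Gen) :=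
  A.fixedRels h ∪ {A.baseHom (squareRel v)}

section

variable {A} {G : Type*} [Group G] {φ : FreeGroup A.Gen →* G}

theorem fixedRels_subset_ker_iff {h : I → ℤ} :
    A.fixedRels h ⊆ φ.ker ↔
      (∀ i j, Commute (φ (A.baseHom (of (x i)))) (φ (A.baseHom (of (x j))))) ∧
      (∀ r w, φ (of (.rule r)) * φ (A.baseHom (rescale (A.srcMul r) (A.srcOff r) w)) *
        (φ (of (.rule r)))⁻¹ = φ (A.baseHom (rescale (A.tgtMul r) (A.tgtOff r) w))) ∧
      Commute (φ (A.baseHom (of k))) (φ (A.baseHom (mark h))) ∧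
      ∀ s, φ (of (.conj s)) * φ (A.baseHom (of t)) * (φ (of (.conj s)))⁻¹ =
        φ (A.baseHom (of s)) := by
  have rule_iff (r : A.Rule) :
      (∀ w, φ (of (.rule r)) * φ (A.baseHom (rescale (A.srcMul r) (A.srcOff r) w)) *
        (φ (of (.rule r)))⁻¹ = φ (A.baseHom (rescale (A.tgtMul r) (A.tgtOff r) w))) ↔
      ∀ s, φ (of (.rule r)) * φ (A.baseHom (rescale (A.srcMul r) (A.srcOff r) (of s))) *
        (φ (of (.rule r)))⁻¹ = φ (A.baseHom (rescale (A.tgtMul r) (A.tgtOff r) (of s))) := by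
    refine ⟨fun H s => H (of s), fun H w => ?_⟩
    exact DFunLike.congr_fun (FreeGroup.ext_hom
      ((MulAut.conj (φ (of (.rule r)))).toMonoidHom.comp <|
        (φ.comp A.baseHom).comp (rescale (A.srcMul r) (A.srcOff r)))
      ((φ.comp A.baseHom).comp (rescale (A.tgtMul r) (A.tgtOff r))) H) w
  simp only [fixedRels, Set.union_subset_iff, Set.range_subset_iff, Set.singleton_subset_iff,
    SetLike.mem_coe, MonoidHom.mem_ker, relator, rule_iff, map_mul, map_inv, mul_inv_eq_one,
    Prod.forall, and_assoc, baseHom_of, commute_iff_eq]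

end

theorem commute_k_mark_iff_of_eqvGen {G : Type*} [Group G] {f : FreeGroup (BaseSymbol I) →* G}
    (hx : ∀ i j, Commute (f (of (x i))) (f (of (x j)))) {s : A.Rule → G}
    (hs : ∀ r w, s r * f (rescale (A.srcMul r) (A.srcOff r) w) * (s r)⁻¹ =
      f (rescale (A.tgtMul r) (A.tgtOff r) w)) {v w : I → ℤ} (hvw : EqvGen A.Step v w) :
    Commute (f (of k)) (f (mark v)) ↔ Commute (f (of k)) (f (mark w)) := by
  induction hvw with
  | rel v w hvw =>
    obtain ⟨r, u, rfl, rfl⟩ := hvw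
    have hk := hs r (of k)
    have hmark := hs r (mark u)
    rw [rescale_k, rescale_k] at hk
    rw [map_rescale_mark hx, map_rescale_mark hx] at hmark
    rw [← hmark]
    nth_rw 2 [← hk]
    rw [Commute.conj_iff]
  | refl => rfl
  | symm _ _ _ ih => exact ih.symm
  | trans _ _ _ _ _ ih₁ ih₂ => exact ih₁.trans ih₂

theorem map_squareRel_eq_one_iff {G : Type*} [Group G] {f : FreeGroup (BaseSymbol I) →* G}
    {v : I → ℤ} :
    f (squareRel v) = 1 ↔ f (of k) * f (mark v) * (f (of k))⁻¹ = f (mark v) ^ 2 := by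
  simp only [squareRel, relator, map_mul, map_inv, map_pow, mul_inv_eq_one]

theorem map_mark_eq_one_iff {G : Type*} [Group G] {f : FreeGroup (BaseSymbol I) →* G}
    {v : I → ℤ} : f (mark v) = 1 ↔ f (of t) = 1 := by
  simp only [mark, map_mul, map_inv, conj_eq_one_iff]

theorem rels_subset_normalClosure_baseRels (v h : I → ℤ) :
    A.rels v h ⊆ Subgroup.normalClosure A.baseRels := by
  set π := QuotientGroup.mk' (Subgroup.normalClosure A.baseRels) with hπ
  have hbase (w) : π (A.baseHom w) = 1 := by
    refine DFunLike.congr_fun (FreeGroup.ext_hom (π.comp A.baseHom) 1 fun s => ?_) w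
    exact (QuotientGroup.eq_one_iff _).2
      (Subgroup.subset_normalClosure ⟨_, ⟨s, rfl⟩, (A.baseHom_of s).symm⟩)
  rw [← QuotientGroup.ker_mk' (Subgroup.normalClosure A.baseRels), ← hπ]
  refine Set.union_subset (fixedRels_subset_ker_iff.2 ?_) (Set.singleton_subset_iff.2 (hbase _))
  simp [hbase]

theorem normalClosure_rels_of_eqvGen {v h : I → ℤ} (H : EqvGen A.Step v h) :
    Subgroup.normalClosure (A.rels v h) = Subgroup.normalClosure A.baseRels := by
  refine (Subgroup.normalClosure_le_normal
    (A.rels_subset_normalClosure_baseRels v h)).antisymm ?_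
  set π := QuotientGroup.mk' (Subgroup.normalClosure (A.rels v h)) with hπ
  have hker : A.rels v h ⊆ π.ker := by
    rw [hπ, QuotientGroup.ker_mk']
    exact Subgroup.subset_normalClosure
  obtain ⟨hfixed, hsquare⟩ := Set.union_subset_iff.1 hker
  obtain ⟨hx, hrule, hk, hconj⟩ := fixedRels_subset_ker_iff.1 hfixed
  have hcomm : Commute (π (A.baseHom (of k))) (π (A.baseHom (mark v))) :=
    (A.commute_k_mark_iff_of_eqvGen (f := π.comp A.baseHom) hx hrule H).2 hk
  have hsq : π (A.baseHom (of k)) * π (A.baseHom (mark v)) * (π (A.baseHom (of k)))⁻¹ =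
      π (A.baseHom (mark v)) ^ 2 :=
    (map_squareRel_eq_one_iff (f := π.comp A.baseHom)).1 (hsquare rfl)
  have ht : π (A.baseHom (of t)) = 1 := by
    refine (map_mark_eq_one_iff (f := π.comp A.baseHom) (v := v)).1 ?_
    simpa [hcomm.mul_inv_cancel, sq] using hsq
  refine A.normalClosure_baseRels_le fun s => (QuotientGroup.eq_one_iff _).1 ?_
  have hs := hconj s
  rw [ht, mul_one, mul_inv_cancel, baseHom_of] at hs
  exact hs.symm

theorem exists_not_commute_of_fixedRels_subset {h : I → ℤ} {N : Subgroup (FreeGroup A.Gen)}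
    (hN : A.fixedRels h ⊆ N) : ∃ a ∈ N, ∃ b ∈ N, ¬ Commute a b := by
  refine ⟨_, hN (.inl (.inr rfl)), _, hN (.inr ⟨k, rfl⟩), fun H => ?_⟩
  let φ : FreeGroup A.Gen →* Equiv.Perm (Fin 3) := FreeGroup.lift fun
    | .base t => finRotate 3
    | .base k => Equiv.swap 0 1
    | _ => 1
  have hbase (s) : φ (A.baseHom (of s)) = φ (of (.base s)) := by rw [baseHom_of]
  have htranslation : φ (A.baseHom (translation h)) = 1 := by
    rw [translation, map_vecProd, map_vecProd]
    simp [vecProd, hbase, φ]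
  have hcomm := (H.map φ).eq
  simp only [relator, mark, map_mul, map_inv, htranslation, hbase] at hcomm
  simp only [φ, FreeGroup.lift_apply_of] at hcomm
  revert hcomm
  decide

section

variable [DecidableEq I]

theorem ker_baseRep_comp_rescale_eq {C : Set (I → ℤ)}
    (hC : ∀ v w, A.Step v w → (v ∈ C ↔ w ∈ C)) (r : A.Rule) :
    ((baseRep C).comp (rescale (A.srcMul r) (A.srcOff r))).ker =
      ((baseRep C).comp (rescale (A.tgtMul r) (A.tgtOff r))).ker := by
  rw [ker_baseRep_comp_rescale _ _ (A.srcMul_ne_zero r),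
    ker_baseRep_comp_rescale _ _ (A.tgtMul_ne_zero r)]
  congr 2
  exact Set.ext fun u => hC _ _ ⟨r, u, rfl, rfl⟩

theorem exists_hom_comp_baseHom {C : Set (I → ℤ)} {h : I → ℤ} (hh : h ∈ C)
    (hC : ∀ v w, A.Step v w → (v ∈ C ↔ w ∈ C)) :
    ∃ (H : Type u) (_ : Group H) (ι : _ →* H) (φ : FreeGroup A.Gen →* H), Injective ι ∧
      φ.comp A.baseHom = ι.comp (baseRep C) ∧ A.fixedRels h ⊆ φ.ker := by
  obtain ⟨H₁, _, ι₁, s, hι₁, hs⟩ := exists_forall_conj_eq_of_ker_eq _ _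
    (A.ker_baseRep_comp_rescale_eq hC)
  have horder (s : BaseSymbol I) : ¬ IsOfFinOrder (ι₁ (baseRep C (of s))) := by
    rw [hι₁.isOfFinOrder_iff]
    exact not_isOfFinOrder_baseRep_of C s
  obtain ⟨H, _, ι₂, c, hι₂, hc⟩ := exists_forall_conj_eq_of_not_isOfFinOrder (horder t) horder
  let φ : FreeGroup A.Gen →* H := FreeGroup.lift fun
    | .base s => ι₂ (ι₁ (baseRep C (of s)))
    | .rule r => ι₂ (s r)
    | .conj s => c s
  have hφ : φ.comp A.baseHom = (ι₂.comp ι₁).comp (baseRep C) := by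
    refine FreeGroup.ext_hom _ _ fun s => ?_
    simp [baseHom_of, φ]
  have hφ' (w) : φ (A.baseHom w) = ι₂ (ι₁ (baseRep C w)) := DFunLike.congr_fun hφ w
  refine ⟨H, inferInstance, ι₂.comp ι₁, φ, hι₂.comp hι₁, hφ, fixedRels_subset_ker_iff.2 ?_⟩
  simp only [hφ']
  refine ⟨fun i j => ((commute_baseRep_x C i j).map ι₁).map ι₂, fun r w => ?_,
    ((commute_baseRep_k_mark C hh).map ι₁).map ι₂, fun s => ?_⟩
  · simpa [φ] using congrArg ι₂ (hs r w)
  · simpa [φ] using hc s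

end

theorem of_t_notMem_normalClosure_rels {v h : I → ℤ} (H : ¬ EqvGen A.Step v h) :
    A.baseHom (of t) ∉ Subgroup.normalClosure (A.rels v h) := by
  classical
  let C : Set (I → ℤ) := {u | EqvGen A.Step u h}
  have hC (v w) (hvw : A.Step v w) : v ∈ C ↔ w ∈ C :=
    ⟨fun H => .trans _ _ _ (.symm _ _ (.rel _ _ hvw)) H, fun H => .trans _ _ _ (.rel _ _ hvw) H⟩
  obtain ⟨G, _, ι, φ, hι, hφ, hfixed⟩ := A.exists_hom_comp_baseHom (C := C) (.refl h) hC
  have hsquare : φ.comp A.baseHom (squareRel v) = 1 := by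
    rw [hφ, MonoidHom.comp_apply, map_squareRel_eq_one_iff.2 (baseRep_k_conj_mark C H), map_one]
  have hle : Subgroup.normalClosure (A.rels v h) ≤ φ.ker :=
    Subgroup.normalClosure_le_normal
      (Set.union_subset hfixed (Set.singleton_subset_iff.2 hsquare))
  intro ht
  have hrep : ι (baseRep C (of t)) = 1 := (DFunLike.congr_fun hφ (of t)).symm.trans (hle ht)
  refine not_isOfFinOrder_baseRep_of C t ?_
  rw [(map_eq_one_iff ι hι).1 hrep]
  exact IsOfFinOrder.one

theorem isBaumslagSolitarFree_quotient_rels_iff {v h : I → ℤ} :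
    IsBaumslagSolitarFree (FreeGroup A.Gen ⧸ Subgroup.normalClosure (A.rels v h)) ↔
      EqvGen A.Step v h := by
  refine ⟨fun hfree => by_contra fun H => ?_, fun H => ?_⟩
  · let π := QuotientGroup.mk' (Subgroup.normalClosure (A.rels v h))
    have hsquare : π.comp A.baseHom (squareRel v) = 1 :=
      (QuotientGroup.eq_one_iff _).2 (Subgroup.subset_normalClosure (.inr rfl))
    have ht : π.comp A.baseHom (of t) = 1 :=
      map_mark_eq_one_iff.1 (hfree (map_squareRel_eq_one_iff.1 hsquare))
    exact A.of_t_notMem_normalClosure_rels H ((QuotientGroup.eq_one_iff _).1 ht)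
  · exact (isBaumslagSolitarFree_quotient_normalClosure_of _).of_mulEquiv
      (QuotientGroup.quotientMulEquivOfEq (A.normalClosure_rels_of_eqvGen H))

theorem nonempty_fiberSquare_rels_mulEquiv_iff {v h : I → ℤ} :
    Nonempty (fiberSquare (Subgroup.normalClosure (A.rels v h)) ≃*
      fiberSquare (Subgroup.normalClosure A.baseRels)) ↔ EqvGen A.Step v h := by
  refine ⟨fun ⟨e⟩ => ?_, fun H => ?_⟩
  · obtain ⟨e'⟩ := nonempty_quotient_mulEquiv_of_fiberSquare isCommutativeTransitive_freeGroup
      isCommutativeTransitive_freeGroup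
      (A.exists_not_commute_of_fixedRels_subset
        (Set.subset_union_left.trans Subgroup.subset_normalClosure))
      (A.exists_not_commute_of_fixedRels_subset
        (Set.subset_union_left.trans (A.rels_subset_normalClosure_baseRels v h))) e
    exact A.isBaumslagSolitarFree_quotient_rels_iff.1
      ((isBaumslagSolitarFree_quotient_normalClosure_of _).of_mulEquiv e')
  · exact ⟨MulEquiv.subgroupCongr (by simp only [A.normalClosure_rels_of_eqvGen H])⟩

end AffineSystem

/-! ### Countable free groups inside the free group of rank two -/

section

open FreeGroup (lift of)

/-- The automorphisms of the free group on `ℤ` that translate the generators. -/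
def freeGroupTranslate : Multiplicative ℤ →* MulAut (FreeGroup ℤ) where
  toFun m := FreeGroup.freeGroupCongr (Equiv.addLeft m.toAdd)
  map_one' := MulEquiv.toMonoidHom_injective (FreeGroup.ext_hom _ _ fun i => by simp)
  map_mul' a b := MulEquiv.toMonoidHom_injective (FreeGroup.ext_hom _ _ fun i => by
    simp [add_assoc])

theorem freeGroupTranslate_of (m i : ℤ) : freeGroupTranslate (.ofAdd m) (of i) = of (m + i) := by
  simp [freeGroupTranslate]

theorem injective_lift_conj_zpow :
    Injective (lift fun i : ℤ => of true ^ i * of false * (of true ^ i)⁻¹) := by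
  let φ : FreeGroup Bool →* FreeGroup ℤ ⋊[freeGroupTranslate] Multiplicative ℤ :=
    lift fun b => bif b then .inr (.ofAdd 1) else .inl (of 0)
  have hφ_zpow (i : ℤ) : φ (of true ^ i) = .inr (.ofAdd i) := by
    rw [map_zpow, show φ (of true) = .inr (.ofAdd 1) from FreeGroup.lift_apply_of, ← map_zpow,
      ← ofAdd_zsmul, smul_eq_mul, mul_one]
  have hφ_false : φ (of false) = .inl (of 0) := FreeGroup.lift_apply_of
  have hφ : φ.comp (lift fun i : ℤ => of true ^ i * of false * (of true ^ i)⁻¹) =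
      SemidirectProduct.inl := by
    refine FreeGroup.ext_hom _ _ fun i => ?_
    rw [MonoidHom.comp_apply, FreeGroup.lift_apply_of, map_mul, map_mul, map_inv, hφ_zpow,
      hφ_false, ← map_inv, ← SemidirectProduct.inl_aut, freeGroupTranslate_of, add_zero]
  refine Injective.of_comp (f := φ) ?_
  rw [← MonoidHom.coe_comp, hφ]
  exact SemidirectProduct.inl_injective

theorem exists_injective_freeGroup_bool (X : Type*) [Countable X] :
    ∃ j : FreeGroup X →* FreeGroup Bool, Injective j := by
  obtain ⟨c, hc⟩ := exists_injective_nat X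
  exact ⟨(lift _).comp (FreeGroup.map fun x => (c x : ℤ)), injective_lift_conj_zpow.comp
    (FreeGroup.map_injective (Nat.cast_injective.comp hc))⟩

end

/-! ### Computable sequences of words -/

section ComputableWords

variable {n : ℕ} {R : Set (FreeGroup (Fin n))}

/-- The elements `g m` of a presented group are represented by words that can be computed
from `m`. -/
def HasComputableWords (R : Set (FreeGroup (Fin n))) (g : ℕ → PresentedGroup R) : Prop :=
  ∃ w : ℕ → List (Fin n × Bool), Computable w ∧ ∀ m, PresentedGroup.mk R (.mk (w m)) = g m

theorem exists_mk_mk_eq (g : PresentedGroup R) : ∃ u, PresentedGroup.mk R (.mk u) = g := by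
  obtain ⟨w, rfl⟩ := PresentedGroup.mk_surjective R g
  exact ⟨w.toWord, by rw [FreeGroup.mk_toWord]⟩

theorem exists_setOf_mk_eq {s : Set (PresentedGroup R)} (hs : s.Finite) :
    ∃ S : List (List (Fin n × Bool)), {g | ∃ u ∈ S, g = PresentedGroup.mk R (.mk u)} = s := by
  choose u hu using exists_mk_mk_eq (R := R)
  refine ⟨hs.toFinset.toList.map u, Set.ext fun g => ?_⟩
  simp [hu]

theorem wordsSubgroup_cons (u : List (Fin n × Bool)) (S : List (List (Fin n × Bool))) :
    wordsSubgroup R (u :: S) =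
      wordsSubgroup R S ⊔ Subgroup.closure {PresentedGroup.mk R (.mk u)} := by
  rw [wordsSubgroup, wordsSubgroup, ← Subgroup.closure_union]
  congr 1
  ext g
  simp

namespace HasComputableWords

theorem const (g : PresentedGroup R) : HasComputableWords R fun _ => g := by
  obtain ⟨u, hu⟩ := exists_mk_mk_eq g
  exact ⟨fun _ => u, .const u, fun _ => hu⟩

theorem mul {g h : ℕ → PresentedGroup R} (hg : HasComputableWords R g)
    (hh : HasComputableWords R h) : HasComputableWords R fun m => g m * h m := by
  obtain ⟨u, hu, hug⟩ := hg
  obtain ⟨v, hv, hvh⟩ := hh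
  exact ⟨fun m => u m ++ v m, Computable.list_append.comp hu hv, fun m => by
    rw [← FreeGroup.mul_mk, map_mul, hug, hvh]⟩

theorem inv {g : ℕ → PresentedGroup R} (hg : HasComputableWords R g) :
    HasComputableWords R fun m => (g m)⁻¹ := by
  obtain ⟨u, hu, hug⟩ := hg
  have hinvRev : Primrec (FreeGroup.invRev : List (Fin n × Bool) → _) :=
    Primrec.list_reverse.comp (Primrec.list_map .id
      ((Primrec.fst.comp .snd).pair (Primrec.not.comp (Primrec.snd.comp .snd))))
  exact ⟨fun m => FreeGroup.invRev (u m), hinvRev.to_comp.comp hu, fun m => by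
    rw [← FreeGroup.inv_mk, map_inv, hug]⟩

theorem pow (g : PresentedGroup R) : HasComputableWords R fun m => g ^ m := by
  obtain ⟨u, hu⟩ := exists_mk_mk_eq g
  refine ⟨fun m => m.rec [] fun _ v => u ++ v, (Primrec.nat_rec₁ _
    (Primrec.list_append.comp (.const u) .snd).to₂).to_comp, fun m => ?_⟩
  induction m with
  | zero => exact (map_one (PresentedGroup.mk R)).trans (pow_zero g).symm
  | succ m ih =>
    simp only [pow_succ', ← ih]
    rw [← FreeGroup.mul_mk, map_mul, hu]

theorem list_prod {α : Type*} {g : α → ℕ → PresentedGroup R}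
    (hg : ∀ i, HasComputableWords R (g i)) (l : List α) :
    HasComputableWords R fun m => (l.map (g · m)).prod := by
  induction l with
  | nil => exact const 1
  | cons i l ih => exact (hg i).mul ih

theorem vecProd {I : Type*} [Fintype I] (x : I → PresentedGroup R) (a b : I → ℤ) :
    HasComputableWords R fun m => _root_.vecProd x (a + (m : ℤ) • b) := by
  refine list_prod (fun i => ?_) _
  have hpow (m : ℕ) : x i ^ (a + (m : ℤ) • b) i = x i ^ a i * (x i ^ b i) ^ m := by
    rw [Pi.add_apply, Pi.smul_apply, smul_eq_mul, zpow_add, mul_comm (m : ℤ), zpow_mul,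
      zpow_natCast]
  simp only [hpow]
  exact (const _).mul (pow _)

theorem map_squareRel {I : Type*} [Fintype I] (ψ : FreeGroup (BaseSymbol I) →* PresentedGroup R)
    (a b : I → ℤ) : HasComputableWords R fun m => ψ (AffineSystem.squareRel (a + (m : ℤ) • b)) := by
  have hmark : HasComputableWords R fun m => ψ (BaseSymbol.mark (a + (m : ℤ) • b)) := by
    simp only [BaseSymbol.mark, BaseSymbol.translation, map_mul, map_inv, map_vecProd]
    exact ((vecProd _ a b).mul (const _)).mul (vecProd _ a b).inv
  simp only [AffineSystem.squareRel, relator, pow_two, map_mul, map_inv]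
  exact (((const _).mul hmark).mul (const _).inv).mul (hmark.mul hmark).inv

end HasComputableWords

end ComputableWords

/-! ### The isomorphism problem -/

theorem nonempty_map_mulEquiv_map_iff {G H : Type*} [Group G] [Group H] {f : G →* H}
    (hf : Injective f) {K L : Subgroup G} :
    Nonempty (K.map f ≃* L.map f) ↔ Nonempty (K ≃* L) :=
  ⟨fun ⟨e⟩ => ⟨(K.equivMapOfInjective f hf).trans (e.trans (L.equivMapOfInjective f hf).symm)⟩,
    fun ⟨e⟩ => ⟨(K.equivMapOfInjective f hf).symm.trans (e.trans (L.equivMapOfInjective f hf))⟩⟩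

theorem map_fiberSquare_normalClosure {X G : Type*} [Group G]
    (Ψ : FreeGroup X × FreeGroup X →* G) (rels : Set (FreeGroup X)) :
    (fiberSquare (Subgroup.normalClosure rels)).map Ψ = Subgroup.closure
      (Set.range (fun x => Ψ (.of x, .of x)) ∪ (fun w => Ψ (1, w)) '' rels) := by
  rw [fiberSquare_normalClosure (FreeGroup.closure_range_of X), MonoidHom.map_closure,
    Set.image_union, Set.image_image, Set.image_image, ← Set.range_comp]
  rfl

section

variable {n : ℕ} {R : Set (FreeGroup (Fin n))} {X : Type*}
  (Ψ : FreeGroup X × FreeGroup X →* PresentedGroup R) {rels : Set (FreeGroup X)}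

theorem exists_wordsSubgroup_eq_map_fiberSquare [Finite X] (hrels : rels.Finite) :
    ∃ S, wordsSubgroup R S = (fiberSquare (Subgroup.normalClosure rels)).map Ψ := by
  obtain ⟨S, hS⟩ := exists_setOf_mk_eq <|
    (Set.finite_range fun x => Ψ (.of x, .of x)).union (hrels.image fun w => Ψ (1, w))
  exact ⟨S, by rw [wordsSubgroup, hS, map_fiberSquare_normalClosure]⟩

theorem wordsSubgroup_cons_eq_map_fiberSquare {S : List (List (Fin n × Bool))}
    (hS : wordsSubgroup R S = (fiberSquare (Subgroup.normalClosure rels)).map Ψ)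
    {u : List (Fin n × Bool)} {w : FreeGroup X} (hu : PresentedGroup.mk R (.mk u) = Ψ (1, w)) :
    wordsSubgroup R (u :: S) = (fiberSquare (Subgroup.normalClosure (rels ∪ {w}))).map Ψ := by
  rw [wordsSubgroup_cons, hS, hu, map_fiberSquare_normalClosure, map_fiberSquare_normalClosure,
    ← Subgroup.closure_union, Set.union_assoc, Set.image_union, Set.image_singleton]

end

theorem isomorphism_problem_unsolvable_of_F2xF2_general {n : ℕ} (R : Set (FreeGroup (Fin n)))
    (ι : FreeGroup Bool × FreeGroup Bool →* PresentedGroup R) (hι : Injective ι) :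
    ∃ T : List (List (Fin n × Bool)), ¬ ComputablePred fun S : List (List (Fin n × Bool)) =>
      Nonempty (wordsSubgroup R S ≃* wordsSubgroup R T) := by
  obtain ⟨I, _, A, a, b, h, hA⟩ := exists_affineSystem_not_computablePred
  cases nonempty_fintype I
  obtain ⟨j, hj⟩ := exists_injective_freeGroup_bool A.Gen
  let Ψ : FreeGroup A.Gen × FreeGroup A.Gen →* PresentedGroup R := ι.comp (j.prodMap j)
  have hΨ : Injective Ψ := hι.comp (hj.prodMap hj)
  obtain ⟨S, hS⟩ := exists_wordsSubgroup_eq_map_fiberSquare Ψ (A.finite_fixedRels h)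
  obtain ⟨T, hT⟩ := exists_wordsSubgroup_eq_map_fiberSquare Ψ A.finite_baseRels
  obtain ⟨w, hw, hwΨ⟩ := HasComputableWords.map_squareRel
    ((Ψ.comp (.inr _ _)).comp A.baseHom) a b
  have hiso (m : ℕ) : EqvGen A.Step (a + (m : ℤ) • b) h ↔
      Nonempty (wordsSubgroup R (w m :: S) ≃* wordsSubgroup R T) := by
    rw [hT, wordsSubgroup_cons_eq_map_fiberSquare Ψ hS (hwΨ m), nonempty_map_mulEquiv_map_iff hΨ]
    exact A.nonempty_fiberSquare_rels_mulEquiv_iff.symm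
  exact ⟨T, fun hdec => hA <| ComputablePred.computable_of_manyOneReducible
    ⟨fun m => w m :: S, Computable.list_cons.comp hw (.const S), hiso⟩ hdec⟩

/-- If a finitely presented group `G = PresentedGroup R` contains a copy of the
product of two nonabelian free groups of rank 2, then the isomorphism problem for
finitely generated subgroups of `G` is unsolvable: no computable function decides
whether the subgroups generated by two given finite lists of words are isomorphic. -/
theorem isomorphism_problem_unsolvable_of_F2xF2 {n : ℕ}
    (R : Set (FreeGroup (Fin n))) (hR : R.Finite)
    (ι : FreeGroup Bool × FreeGroup Bool →* PresentedGroup R)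
    (hι : Function.Injective ι) :
    ¬ ∃ f : List (List (Fin n × Bool)) → List (List (Fin n × Bool)) → Bool,
      Computable₂ f ∧
      ∀ S T : List (List (Fin n × Bool)),
        (f S T = true ↔
          Nonempty (↥(wordsSubgroup R S) ≃* ↥(wordsSubgroup R T))) := by
  rintro ⟨f, hf, hfST⟩
  obtain ⟨T, hT⟩ := isomorphism_problem_unsolvable_of_F2xF2_general R ι hι
  exact hT <| ComputablePred.computable_iff.2
    ⟨(f · T), hf.comp .id (.const T), funext fun S => propext (hfST S T).symm⟩
end

section
/- Every subgroup of an RFRS group is RFRS: if G is a group admitting a sequence G = G₀ ≥ G₁ ≥ G₂ ≥ … of finite-index normal subgroups of G with trivial intersection such that for each i every element of Gᵢ whose image in the abelianization of Gᵢ is torsion lies in Gᵢ₊₁, then every subgroup H ≤ G admits such a sequence as well (witnessed by Hᵢ = Gᵢ ∩ H). -/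
/-!
Torsion in the abelianization is preserved by group homomorphisms, because abelianization is
functorial. Hence the torsion condition on a sequence of subgroups of `G` pulls back along any
homomorphism `f : H →* G`, as do normality and finiteness of index. The intersection of the
preimages is the kernel of `f`, which is trivial for the inclusion of a subgroup.
-/

theorem isOfFinOrder_abelianizationOf_map {G K : Type*} [Group G] [Group K] (f : G →* K) {g : G}
    (hg : IsOfFinOrder (Abelianization.of g)) : IsOfFinOrder (Abelianization.of (f g)) := by
  simpa only [Abelianization.map_of] using (Abelianization.map f).isOfFinOrder hg

theorem finiteIndex_comap {G K : Type*} [Group G] [Group K] (f : G →* K) (L : Subgroup K)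
    [L.FiniteIndex] : (L.comap f).FiniteIndex where
  index_ne_zero := by
    rw [Subgroup.index_comap]
    have : L.IsFiniteRelIndex f.range := Subgroup.isFiniteRelIndex_of_finiteIndex
    exact Subgroup.relIndex_ne_zero

/-- A sequence of subgroups witnessing that `G` is RFRS. The torsion condition at `i` refers to the
abelianization of the subgroup `Gs i` itself, not to its image in the abelianization of `G`. -/
structure IsRFRSFiltration {G : Type*} [Group G] (Gs : ℕ → Subgroup G) : Prop where
  zero_eq_top : Gs 0 = ⊤
  normal (i : ℕ) : (Gs i).Normal
  finiteIndex (i : ℕ) : (Gs i).FiniteIndex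
  succ_le (i : ℕ) : Gs (i + 1) ≤ Gs i
  iInf_eq_bot : ⨅ i, Gs i = ⊥
  mem_succ_of_isOfFinOrder (i : ℕ) (g : G) (hg : g ∈ Gs i) :
    IsOfFinOrder (Abelianization.of (⟨g, hg⟩ : Gs i)) → g ∈ Gs (i + 1)

theorem IsRFRSFiltration.comap {G H : Type*} [Group G] [Group H] {Gs : ℕ → Subgroup G}
    (hGs : IsRFRSFiltration Gs) {f : H →* G} (hf : Function.Injective f) :
    IsRFRSFiltration fun i => (Gs i).comap f where
  zero_eq_top := by rw [hGs.zero_eq_top, Subgroup.comap_top]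
  normal i := (hGs.normal i).comap f
  finiteIndex i :=
    have := hGs.finiteIndex i
    finiteIndex_comap f (Gs i)
  succ_le i := Subgroup.comap_mono (hGs.succ_le i)
  iInf_eq_bot := by
    rw [← Subgroup.comap_iInf, hGs.iInf_eq_bot, MonoidHom.comap_bot, f.ker_eq_bot_iff.mpr hf]
  mem_succ_of_isOfFinOrder i h hh htorsion :=
    hGs.mem_succ_of_isOfFinOrder i (f h) hh <|
      isOfFinOrder_abelianizationOf_map (f.subgroupComap (Gs i)) htorsion

/-- Every subgroup of an RFRS group is RFRS, witnessed by `Hᵢ = Gᵢ ∩ H`. -/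
theorem subgroup_rfrs {G : Type*} [Group G] (Gs : ℕ → Subgroup G)
    (h0 : Gs 0 = ⊤) (hnorm : ∀ i, (Gs i).Normal) (hfi : ∀ i, (Gs i).FiniteIndex)
    (hdec : ∀ i, Gs (i + 1) ≤ Gs i) (hint : (⨅ i, Gs i) = ⊥)
    (hrfrs : ∀ i, ∀ g, ∀ hg : g ∈ Gs i,
      IsOfFinOrder (Abelianization.of (⟨g, hg⟩ : ↥(Gs i))) → g ∈ Gs (i + 1))
    (H : Subgroup G) :
    ∃ Hs : ℕ → Subgroup ↥H,
      (∀ i, ∀ h : ↥H, h ∈ Hs i ↔ (h : G) ∈ Gs i) ∧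
      Hs 0 = ⊤ ∧ (∀ i, (Hs i).Normal) ∧ (∀ i, (Hs i).FiniteIndex) ∧
      (∀ i, Hs (i + 1) ≤ Hs i) ∧ (⨅ i, Hs i) = ⊥ ∧
      ∀ i, ∀ h, ∀ hh : h ∈ Hs i,
        IsOfFinOrder (Abelianization.of (⟨h, hh⟩ : ↥(Hs i))) → h ∈ Hs (i + 1) := by
  have hG : IsRFRSFiltration Gs := ⟨h0, hnorm, hfi, hdec, hint, hrfrs⟩
  have hH : IsRFRSFiltration fun i => (Gs i).comap H.subtype := hG.comap H.subtype_injective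
  exact ⟨fun i => (Gs i).comap H.subtype, fun _ _ => Subgroup.mem_comap, hH.zero_eq_top, hH.normal,
    hH.finiteIndex, hH.succ_le, hH.iInf_eq_bot, hH.mem_succ_of_isOfFinOrder⟩
end

section
/- Let Γ be a finite simple graph and let a, b ∈ A(Γ) be elements each of which lies in a clique subgroup of A(Γ) (that is, a lies in the subgroup generated by the vertex generators of some complete subgraph of Γ, and likewise for b, possibly a different complete subgraph). If a and b do not commute, then the subgroup of A(Γ) generated by a and b is a free group of rank 2 (a and b freely generate it, i.e. the homomorphism from the free group on two generators sending the generators to a and b is injective). -/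
/-- The relators of the right-angled Artin group on a simple graph `Γ`:
one commutator for each edge. -/
def raagRels {V : Type*} (Γ : SimpleGraph V) : Set (FreeGroup V) :=
  {r | ∃ u v : V, Γ.Adj u v ∧
    r = FreeGroup.of u * FreeGroup.of v * (FreeGroup.of u)⁻¹ * (FreeGroup.of v)⁻¹}

/-!
An element of a clique subgroup is a product of powers of commuting vertex generators, the powers
being its exponent sums. If `a` and `b` do not commute, some `u` with nonzero exponent in `a` and
some `v` with nonzero exponent in `b` are therefore distinct and nonadjacent. Killing all other
vertices maps `A(Γ)` onto the free product `⟨u⟩ * ⟨v⟩`. A clique contains at most one of `u`, `v`,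
so `a` and `b` go to nontrivial powers of `u` and `v`. These freely generate a free group, hence
so do `a` and `b`.
-/

open Function Monoid

section FreeProduct

variable {ι κ : Type*} {e : ι → κ}

section Monoid

variable {M : ι → Type*} {N : κ → Type*} [∀ i, Monoid (M i)] [∀ k, Monoid (N k)]
  {f : ∀ i, M i →* N (e i)}

/-- The reduced word of a free product obtained by reindexing along `e` and applying `f` to each
letter. Injectivity is what keeps the word reduced. -/
def mapReducedWord (he : Injective e) (hf : ∀ i, Injective (f i)) (w : CoprodI.Word M) :
    CoprodI.Word N where
  toList := w.toList.map (Sigma.map e fun i => f i)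
  ne_one := by
    simp only [List.mem_map, forall_exists_index, and_imp, forall_apply_eq_imp_iff₂]
    exact fun l hl => (map_ne_one_iff (f l.1) (hf l.1)).mpr (w.ne_one l hl)
  chain_ne := (List.isChain_map _).mpr (w.chain_ne.imp fun _ _ h => he.ne h)

theorem mapReducedWord_injective (he : Injective e) (hf : ∀ i, Injective (f i)) :
    Injective (mapReducedWord he hf) := fun _ _ h =>
  CoprodI.Word.ext ((he.sigma_map hf).list_map (congrArg CoprodI.Word.toList h))

theorem prod_mapReducedWord (he : Injective e) (hf : ∀ i, Injective (f i)) (w : CoprodI.Word M) :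
    (mapReducedWord he hf w).prod = CoprodI.lift (fun i => CoprodI.of.comp (f i)) w.prod := by
  simp only [mapReducedWord, CoprodI.Word.prod, map_list_prod, List.map_map]
  exact congrArg List.prod (List.map_congr_left fun _ _ => (CoprodI.lift_of _ _).symm)

theorem coprodI_lift_of_comp_injective (he : Injective e) (hf : ∀ i, Injective (f i)) :
    Injective (CoprodI.lift fun i => (CoprodI.of : N (e i) →* CoprodI N).comp (f i)) := by
  classical
  refine (Injective.of_comp_iff' _ CoprodI.Word.equiv.symm.bijective).mp ?_
  have hcomp : CoprodI.lift (fun i => CoprodI.of.comp (f i)) ∘ CoprodI.Word.equiv.symm =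
      CoprodI.Word.equiv.symm ∘ mapReducedWord he hf :=
    funext fun w => (prod_mapReducedWord he hf w).symm
  rw [hcomp]
  exact CoprodI.Word.equiv.symm.injective.comp (mapReducedWord_injective he hf)

end Monoid

theorem freeGroup_lift_unit_injective {G : Type*} [Group G] {g : G} (hg : ¬ IsOfFinOrder g) :
    Injective (FreeGroup.lift fun _ : Unit => g) := by
  refine (Injective.of_comp_iff' _ FreeGroup.freeGroupUnitEquivInt.symm.bijective).mp ?_
  have hcomp : FreeGroup.lift (fun _ : Unit => g) ∘ FreeGroup.freeGroupUnitEquivInt.symm =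
      fun n : ℤ => g ^ n := by
    ext n
    simp [FreeGroup.freeGroupUnitEquivInt]
  rw [hcomp]
  exact injective_zpow_iff_not_isOfFinOrder.mpr hg

theorem freeGroup_lift_coprodI_of_injective {G : κ → Type*} [∀ k, Group (G k)] (he : Injective e)
    {g : ∀ i, G (e i)} (hg : ∀ i, ¬ IsOfFinOrder (g i)) :
    Injective (FreeGroup.lift fun i => (CoprodI.of (g i) : CoprodI G)) := by
  have hcomp : FreeGroup.lift (fun i => (CoprodI.of (g i) : CoprodI G)) =
      (CoprodI.lift fun i => CoprodI.of.comp (FreeGroup.lift fun _ : Unit => g i)).comp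
        freeGroupEquivCoprodI.toMonoidHom := by
    ext i
    simp [freeGroupEquivCoprodI]
  rw [hcomp, MonoidHom.coe_comp]
  exact (coprodI_lift_of_comp_injective he fun i => freeGroup_lift_unit_injective (hg i)).comp
    freeGroupEquivCoprodI.injective

end FreeProduct

theorem exists_finset_subset_mem_closure {G : Type*} [Group G] {s : Set G} {x : G}
    (hx : x ∈ Subgroup.closure s) : ∃ t : Finset G, ↑t ⊆ s ∧ x ∈ Subgroup.closure (t : Set G) := by
  classical
  induction hx using Subgroup.closure_induction with
  | mem x hx => exact ⟨{x}, by simpa using hx, Subgroup.subset_closure (by simp)⟩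
  | one => exact ⟨∅, by simp, one_mem _⟩
  | mul x y _ _ ihx ihy =>
    obtain ⟨t, hts, hxt⟩ := ihx
    obtain ⟨t', hts', hyt'⟩ := ihy
    refine ⟨t ∪ t', by simp [hts, hts'], mul_mem ?_ ?_⟩
    · exact Subgroup.closure_mono (by simp) hxt
    · exact Subgroup.closure_mono (by simp) hyt'
  | inv x _ ih =>
    obtain ⟨t, hts, hxt⟩ := ih
    exact ⟨t, hts, inv_mem hxt⟩

/-- The right-angled Artin group `A(Γ)`. -/
abbrev RightAngledArtinGroup {V : Type*} (Γ : SimpleGraph V) : Type _ :=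
  PresentedGroup (raagRels Γ)

namespace RightAngledArtinGroup

variable {V : Type*} (Γ : SimpleGraph V)

/-- The vertex generator of `A(Γ)` at `v`. -/
def of (v : V) : RightAngledArtinGroup Γ :=
  PresentedGroup.of v

/-- The special subgroup of `A(Γ)` on `S`, generated by the vertex generators of `S`; it is a
clique subgroup when `S` is a clique. -/
def specialSubgroup (S : Set V) : Subgroup (RightAngledArtinGroup Γ) :=
  Subgroup.closure (of Γ '' S)

variable {Γ}

theorem commute_of_of_adj {u v : V} (h : Γ.Adj u v) : Commute (of Γ u) (of Γ v) :=
  commutatorElement_eq_one_iff_commute.mp (PresentedGroup.one_of_mem ⟨u, v, h, rfl⟩)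

/-- The homomorphism out of `A(Γ)` given by its universal property. -/
def lift {G : Type*} [Group G] (f : V → G) (hf : ∀ u v, Γ.Adj u v → Commute (f u) (f v)) :
    RightAngledArtinGroup Γ →* G :=
  PresentedGroup.toGroup (f := f) <| by
    rintro _ ⟨u, v, huv, rfl⟩
    simp [(hf u v huv).eq]

@[simp]
theorem lift_of {G : Type*} [Group G] {f : V → G} (hf : ∀ u v, Γ.Adj u v → Commute (f u) (f v))
    (v : V) : lift f hf (of Γ v) = f v :=
  PresentedGroup.toGroup.of _

theorem eqOn_specialSubgroup {G : Type*} [Group G] {f g : RightAngledArtinGroup Γ →* G} {S : Set V}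
    (h : ∀ v ∈ S, f (of Γ v) = g (of Γ v)) : Set.EqOn f g (specialSubgroup Γ S) :=
  MonoidHom.eqOn_closure (Set.forall_mem_image.mpr h)

theorem exists_finset_subset_mem_specialSubgroup {S : Set V} {a : RightAngledArtinGroup Γ}
    (ha : a ∈ specialSubgroup Γ S) : ∃ T : Finset V, ↑T ⊆ S ∧ a ∈ specialSubgroup Γ T := by
  classical
  obtain ⟨t, hts, hat⟩ := exists_finset_subset_mem_closure ha
  obtain ⟨T, hTS, rfl⟩ := Finset.subset_set_image_iff.mp hts
  exact ⟨T, hTS, by simpa [specialSubgroup] using hat⟩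

open Classical in
/-- The exponent sum of the vertex generator at `v`, written multiplicatively. -/
noncomputable def exponentSum (Γ : SimpleGraph V) (v : V) :
    RightAngledArtinGroup Γ →* Multiplicative ℤ :=
  lift (Pi.mulSingle v (.ofAdd 1)) fun _ _ _ => .all _ _

@[simp]
theorem exponentSum_of_self (v : V) : exponentSum Γ v (of Γ v) = .ofAdd 1 := by
  simp [exponentSum]

theorem exponentSum_of_ne {v w : V} (h : w ≠ v) : exponentSum Γ v (of Γ w) = 1 := by
  simp [exponentSum, h]

section Clique

theorem pairwise_commute_zpowersHom_of {T : Finset V} (hT : Γ.IsClique T) :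
    Pairwise fun v w : T => ∀ m n, Commute (zpowersHom _ (of Γ v) m) (zpowersHom _ (of Γ w) n) := by
  intro v w hvw m n
  have hadj : Γ.Adj v w := hT v.2 w.2 (Subtype.coe_ne_coe.mpr hvw)
  simpa using (commute_of_of_adj hadj).zpow_zpow m.toAdd n.toAdd

/-- The homomorphism `ℤ^T → A(Γ)` onto the special subgroup of a finite clique `T`. -/
noncomputable def cliqueHom {T : Finset V} (hT : Γ.IsClique T) :
    (T → Multiplicative ℤ) →* RightAngledArtinGroup Γ :=
  MonoidHom.noncommPiCoprod (fun v : T => zpowersHom _ (of Γ v)) (pairwise_commute_zpowersHom_of hT)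

theorem cliqueHom_exponentSum {T : Finset V} (hT : Γ.IsClique T) {a : RightAngledArtinGroup Γ}
    (ha : a ∈ specialSubgroup Γ T) : cliqueHom hT (fun v => exponentSum Γ v a) = a := by
  classical
  refine eqOn_specialSubgroup (g := MonoidHom.id _)
    (f := (cliqueHom hT).comp (MonoidHom.pi fun v : T => exponentSum Γ v)) (fun v hv => ?_) ha
  have hexp : (fun w : T => exponentSum Γ w (of Γ v)) = Pi.mulSingle ⟨v, hv⟩ (.ofAdd 1) := by
    ext w
    by_cases hwv : w = ⟨v, hv⟩
    · subst hwv
      simp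
    · rw [Pi.mulSingle_eq_of_ne hwv, exponentSum_of_ne fun h => hwv (Subtype.ext h.symm)]
  change cliqueHom hT (fun w : T => exponentSum Γ w (of Γ v)) = of Γ v
  rw [hexp]
  simp [cliqueHom]

theorem commute_of_forall_exponentSum_ne_one {S : Set V} (hS : Γ.IsClique S)
    {a g : RightAngledArtinGroup Γ} (ha : a ∈ specialSubgroup Γ S)
    (hg : ∀ v ∈ S, exponentSum Γ v a ≠ 1 → Commute (of Γ v) g) : Commute a g := by
  obtain ⟨T, hTS, haT⟩ := exists_finset_subset_mem_specialSubgroup ha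
  rw [← cliqueHom_exponentSum (hS.subset hTS) haT, cliqueHom, MonoidHom.noncommPiCoprod_apply]
  refine (Finset.noncommProd_commute _ _ _ _ fun v _ => ?_).symm
  by_cases hv : exponentSum Γ v a = 1
  · simp [hv]
  · exact ((hg v (hTS v.2) hv).zpow_left _).symm

theorem exists_not_adj_of_not_commute {S S' : Set V} (hS : Γ.IsClique S) (hS' : Γ.IsClique S')
    {a b : RightAngledArtinGroup Γ} (ha : a ∈ specialSubgroup Γ S) (hb : b ∈ specialSubgroup Γ S')
    (hab : ¬ Commute a b) :
    ∃ u ∈ S, ∃ v ∈ S', exponentSum Γ u a ≠ 1 ∧ exponentSum Γ v b ≠ 1 ∧ u ≠ v ∧ ¬ Γ.Adj u v := by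
  by_contra! h
  refine hab (commute_of_forall_exponentSum_ne_one hS ha fun u hu hua => ?_)
  refine (commute_of_forall_exponentSum_ne_one hS' hb fun v hv hvb => ?_).symm
  obtain rfl | huv := eq_or_ne u v
  · exact .refl _
  · exact (commute_of_of_adj (h u hu v hv hua hvb huv)).symm

end Clique

section IndepSet

open Classical in
/-- The homomorphism from `A(Γ)` to a free product of infinite cyclic groups that kills the
vertices outside the independent set `I`. The free product is indexed by all of `V`; the factors
outside `I` are not hit. -/
noncomputable def indepSetHom {I : Set V} (hI : Γ.IsIndepSet I) :
    RightAngledArtinGroup Γ →* CoprodI fun _ : V => Multiplicative ℤ :=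
  lift (fun v => if v ∈ I then CoprodI.of (i := v) (Multiplicative.ofAdd 1) else 1)
    fun u v huv => by
      by_cases hu : u ∈ I
      · have hv : v ∉ I := fun hv => hI hu hv huv.ne huv
        simp [hv]
      · simp [hu]

theorem indepSetHom_of_mem_specialSubgroup {I S : Set V} (hI : Γ.IsIndepSet I)
    (hS : Γ.IsClique S) {u : V} (huI : u ∈ I) (huS : u ∈ S) {a : RightAngledArtinGroup Γ}
    (ha : a ∈ specialSubgroup Γ S) :
    indepSetHom hI a = CoprodI.of (i := u) (exponentSum Γ u a) := by
  refine eqOn_specialSubgroup (f := indepSetHom hI) (g := CoprodI.of.comp (exponentSum Γ u))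
    (fun v hvS => ?_) ha
  obtain rfl | hvu := eq_or_ne v u
  · simp [indepSetHom, huI]
  · have hvI : v ∉ I := fun hvI => hI hvI huI hvu (hS hvS huS hvu)
    simp [indepSetHom, hvI, exponentSum_of_ne hvu]

theorem freeGroup_lift_injective_of_isIndepSet {ι : Type*} {a : ι → RightAngledArtinGroup Γ}
    {S : ι → Set V} (hS : ∀ i, Γ.IsClique (S i)) (ha : ∀ i, a i ∈ specialSubgroup Γ (S i))
    {u : ι → V} (hu : Injective u) (huS : ∀ i, u i ∈ S i) (hI : Γ.IsIndepSet (Set.range u))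
    (hua : ∀ i, exponentSum Γ (u i) (a i) ≠ 1) : Injective (FreeGroup.lift a) := by
  have hcomp : (indepSetHom hI).comp (FreeGroup.lift a) =
      FreeGroup.lift fun i => CoprodI.of (i := u i) (exponentSum Γ (u i) (a i)) := by
    ext i
    simp [indepSetHom_of_mem_specialSubgroup hI (hS i) (Set.mem_range_self i) (huS i) (ha i)]
  refine Injective.of_comp (f := indepSetHom hI) ?_
  rw [← MonoidHom.coe_comp, hcomp]
  exact freeGroup_lift_coprodI_of_injective hu fun i => not_isOfFinOrder_of_isMulTorsionFree (hua i)

end IndepSet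

end RightAngledArtinGroup

open RightAngledArtinGroup

theorem free_of_noncommuting_clique_elements_general {V : Type*}
    (Γ : SimpleGraph V) (a b : RightAngledArtinGroup Γ)
    (Sa Sb : Set V) (hSa : Γ.IsClique Sa) (hSb : Γ.IsClique Sb)
    (ha : a ∈ specialSubgroup Γ Sa) (hb : b ∈ specialSubgroup Γ Sb)
    (hcomm : ¬ Commute a b) :
    Function.Injective (FreeGroup.lift (fun t : Bool => if t then a else b)) := by
  obtain ⟨u, hu, v, hv, hua, hvb, hne, hadj⟩ := exists_not_adj_of_not_commute hSa hSb ha hb hcomm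
  have hindep : Γ.IsIndepSet {v, u} := by
    rw [← SimpleGraph.isClique_compl, SimpleGraph.isClique_pair]
    exact fun h => (Γ.compl_adj v u).mpr ⟨h, fun hvu => hadj hvu.symm⟩
  refine freeGroup_lift_injective_of_isIndepSet (S := fun t => if t then Sa else Sb)
    (u := fun t => if t then u else v) ?_ ?_ ?_ ?_ ?_ ?_
  · simpa using ⟨hSb, hSa⟩
  · simpa using ⟨hb, ha⟩
  · simpa [Bool.injective_iff] using hne.symm
  · simpa using ⟨hv, hu⟩
  · simpa [Bool.range_eq] using hindep
  · simpa using ⟨hvb, hua⟩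

/-- Two non-commuting elements of clique subgroups of a right-angled Artin group
freely generate a free group of rank 2. -/
theorem free_of_noncommuting_clique_elements {V : Type*} [Fintype V]
    (Γ : SimpleGraph V) (a b : PresentedGroup (raagRels Γ))
    (Sa Sb : Set V) (hSa : Γ.IsClique Sa) (hSb : Γ.IsClique Sb)
    (ha : a ∈ Subgroup.closure ((fun v => PresentedGroup.of (rels := raagRels Γ) v) '' Sa))
    (hb : b ∈ Subgroup.closure ((fun v => PresentedGroup.of (rels := raagRels Γ) v) '' Sb))
    (hcomm : ¬ Commute a b) :
    Function.Injective (FreeGroup.lift (fun t : Bool => if t then a else b)) :=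
  free_of_noncommuting_clique_elements_general Γ a b Sa Sb hSa hSb ha hb hcomm
end

section
/- Left greedy normal form: Let Γ be a finite simple graph. For every element g of A(Γ) there exist k ≥ 0, cliques S₁,…,S_k of Γ, and functions eᵢ : Sᵢ → ℤ with eᵢ(v) ≠ 0 for all v ∈ Sᵢ, such that g = w_k · w_{k-1} ⋯ w_1, where wᵢ = ∏_{v ∈ Sᵢ} v^{eᵢ(v)} (a central word: a product of nonzero powers of pairwise-commuting vertex generators), and such that for each 1 ≤ i < k and each vertex v ∈ Sᵢ, the vertex generator v does not commute with the element w_{i+1} in A(Γ). -/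
/-!
Write `g` as any product of central words, numbered by their position from the left, and charge
each letter and each word its position. If a vertex of one word commutes with the word to its left,
moving its power there lowers the total charge, and so does deleting a trivial word; a product that
admits no such move is in left greedy normal form.

A move yields again a product of central words because a vertex generator `v` can commute with a
central word only if it is equal or adjacent to every vertex `u` of that word: otherwise `u` and `v`
can be sent to a rotation of infinite order and a reflection in the infinite dihedral group.
-/

namespace RightAngledArtin

section ZPowProd

variable {ι G H : Type*} [Group G] [Group H]

/-- The product of the powers `x i ^ f i` over the support of `f`, in an unspecified order; it is
meaningful when the factors commute. -/
noncomputable def zpowProd (x : ι → G) (f : ι →₀ ℤ) : G :=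
  (f.support.toList.map fun i => x i ^ f i).prod

@[simp]
theorem zpowProd_zero (x : ι → G) : zpowProd x 0 = 1 := by
  simp [zpowProd]

@[simp]
theorem zpowProd_single (x : ι → G) (i : ι) (n : ℤ) :
    zpowProd x (Finsupp.single i n) = x i ^ n := by
  by_cases hn : n = 0 <;> simp [zpowProd, hn]

theorem map_zpowProd (φ : G →* H) (x : ι → G) (f : ι →₀ ℤ) :
    φ (zpowProd x f) = zpowProd (φ ∘ x) f := by
  simp [zpowProd, map_list_prod, Function.comp_def]

theorem zpowProd_eq_zpow {x : ι → G} {f : ι →₀ ℤ} {i : ι} (hi : i ∈ f.support)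
    (hx : ∀ j ∈ f.support, j ≠ i → x j = 1) : zpowProd x f = x i ^ f i := by
  classical
  rw [zpowProd, List.prod_map_eq_pow_single i, List.count_eq_one_of_mem (Finset.nodup_toList _)
    (Finset.mem_toList.2 hi), pow_one]
  intro j hji hj
  rw [hx j (Finset.mem_toList.1 hj) hji, one_zpow]

theorem zpow_mul_zpowProd_erase {x : ι → G} {f : ι →₀ ℤ}
    (hx : (f.support : Set ι).Pairwise fun j k => Commute (x j) (x k)) (i : ι) :
    x i ^ f i * zpowProd x (f.erase i) = zpowProd x f := by
  classical
  by_cases hi : i ∈ f.support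
  · have hperm : f.support.toList.Perm (i :: (f.erase i).support.toList) := by
      simpa [Finset.insert_erase hi] using
        Finset.toList_insert (Finset.notMem_erase i f.support)
    have hcomm : (f.support.toList.map fun j => x j ^ f j).Pairwise Commute :=
      List.pairwise_map.2 <| (Finset.nodup_toList _).pairwise_of_set_pairwise fun j hj k hk hjk =>
        (hx (Finset.mem_toList.1 hj) (Finset.mem_toList.1 hk) hjk).zpow_zpow _ _
    have herase : (f.erase i).support.toList.map (fun j => x j ^ f.erase i j) =
        (f.erase i).support.toList.map fun j => x j ^ f j :=
      List.map_congr_left fun j hj => by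
        have hji : j ≠ i := by
          rintro rfl
          simp at hj
        rw [Finsupp.erase_ne hji]
    rw [zpowProd, zpowProd, (hperm.map _).prod_eq' hcomm, List.map_cons, List.prod_cons, herase]
  · rw [Finsupp.erase_of_notMem_support hi, Finsupp.notMem_support_iff.1 hi, zpow_zero, one_mul]

theorem coe_support_add_single_subset {M : Type*} [AddZeroClass M] (f : ι →₀ M) (i : ι) (n : M) :
    ((f + Finsupp.single i n).support : Set ι) ⊆ insert i f.support := by
  classical
  exact_mod_cast (Finsupp.support_add.trans
    (Finset.union_subset_union_right Finsupp.support_single_subset)).trans_eq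
    (Finset.union_comm f.support {i})

theorem zpowProd_add_single {x : ι → G} {f : ι →₀ ℤ} {i : ι}
    (hx : (insert i (f.support : Set ι)).Pairwise fun j k => Commute (x j) (x k)) (n : ℤ) :
    zpowProd x (f + Finsupp.single i n) = x i ^ n * zpowProd x f := by
  have herase : (f + Finsupp.single i n).erase i = f.erase i := by
    rw [Finsupp.erase_add, Finsupp.erase_single, add_zero]
  rw [← zpow_mul_zpowProd_erase (hx.mono (coe_support_add_single_subset f i n)) i, herase,
    Finsupp.add_apply, Finsupp.single_eq_same, add_comm, zpow_add, mul_assoc,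
    zpow_mul_zpowProd_erase (hx.mono (Set.subset_insert _ _))]

end ZPowProd

theorem dvd_two_mul_of_commute_sr_zpow {m : ℕ} {i : ZMod m} {n : ℤ}
    (h : Commute (DihedralGroup.sr i) (DihedralGroup.r 1 ^ n)) : (m : ℤ) ∣ 2 * n := by
  have hsr := h.eq
  rw [DihedralGroup.r_one_zpow, DihedralGroup.sr_mul_r, DihedralGroup.r_mul_sr,
    DihedralGroup.sr.injEq] at hsr
  rw [← ZMod.intCast_zmod_eq_zero_iff_dvd]
  push_cast
  linear_combination hsr

variable {V : Type*} {Γ : SimpleGraph V}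

/-- The vertex generator of `A(Γ)` at `v`. -/
abbrev vertex (Γ : SimpleGraph V) (v : V) : PresentedGroup (raagRels Γ) :=
  PresentedGroup.of v

theorem commute_vertex_of_adj {u v : V} (h : Γ.Adj u v) :
    Commute (vertex Γ u) (vertex Γ v) := by
  have hrel : PresentedGroup.mk (raagRels Γ)
      (FreeGroup.of u * FreeGroup.of v * (FreeGroup.of u)⁻¹ * (FreeGroup.of v)⁻¹) = 1 :=
    PresentedGroup.one_of_mem ⟨u, v, h, rfl⟩
  simp only [map_mul, map_inv] at hrel
  exact mul_inv_eq_iff_eq_mul.1 (mul_inv_eq_one.1 hrel)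

theorem exists_hom_apply_vertex {G : Type*} [Group G] (x : V → G)
    (hx : ∀ u v, Γ.Adj u v → Commute (x u) (x v)) :
    ∃ φ : PresentedGroup (raagRels Γ) →* G, ∀ v, φ (vertex Γ v) = x v := by
  have hrel : ∀ r ∈ raagRels Γ, FreeGroup.lift x r = 1 := by
    rintro r ⟨u, v, huv, rfl⟩
    simp [(hx u v huv).eq]
  exact ⟨PresentedGroup.toGroup hrel, fun _ => PresentedGroup.toGroup.of hrel⟩

theorem exists_hom_of_not_adj {G : Type*} [Group G] {u v : V} (huv : u ≠ v) (hadj : ¬ Γ.Adj u v)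
    (a b : G) :
    ∃ φ : PresentedGroup (raagRels Γ) →* G, φ (vertex Γ u) = a ∧ φ (vertex Γ v) = b ∧
      ∀ y, y ≠ u → y ≠ v → φ (vertex Γ y) = 1 := by
  classical
  let x : V → G := fun y => if y = u then a else if y = v then b else 1
  have hcomm : ∀ y z, Γ.Adj y z → Commute (x y) (x z) := by
    intro y z hyz
    have hzy := hyz.symm
    simp only [x]
    split_ifs <;> simp_all
  obtain ⟨φ, hφ⟩ := exists_hom_apply_vertex x hcomm
  exact ⟨φ, by simp [hφ, x], by simp [hφ, x, huv.symm], fun y hyu hyv => by simp [hφ, x, hyu, hyv]⟩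

/-- The product of the vertex powers prescribed by `f`; a central word when the support of `f` is a
clique. -/
noncomputable abbrev word (Γ : SimpleGraph V) (f : V →₀ ℤ) : PresentedGroup (raagRels Γ) :=
  zpowProd (vertex Γ) f

theorem pairwise_commute_vertex {s : Set V} (hs : Γ.IsClique s) :
    s.Pairwise fun u v => Commute (vertex Γ u) (vertex Γ v) :=
  fun _ hu _ hv huv => commute_vertex_of_adj (hs hu hv huv)

theorem isClique_insert_of_commute {f : V →₀ ℤ} {v : V} (hf : Γ.IsClique (f.support : Set V))
    (hcomm : Commute (vertex Γ v) (word Γ f)) : Γ.IsClique (insert v (f.support : Set V)) := by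
  refine hf.insert fun u hu hvu => by_contra fun hadj => ?_
  obtain ⟨φ, hφv, hφu, hφ⟩ := exists_hom_of_not_adj hvu hadj
    (DihedralGroup.sr 0) (DihedralGroup.r 1 : DihedralGroup 0)
  have hword : φ (word Γ f) = DihedralGroup.r 1 ^ f u := by
    rw [map_zpowProd, zpowProd_eq_zpow hu, Function.comp_apply, hφu]
    intro y hy hyu
    exact hφ y (fun hyv => hadj (hyv ▸ hf hy hu hyu)) hyu
  have hmap := hcomm.map φ
  rw [hφv, hword] at hmap
  exact Finsupp.mem_support_iff.1 hu (by simpa using dvd_two_mul_of_commute_sr_zpow hmap)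

/-- The product `w_k ⋯ w_1` of the words of a list `[f_1, …, f_k]` of exponent vectors. -/
noncomputable def listProd (Γ : SimpleGraph V) (L : List (V →₀ ℤ)) : PresentedGroup (raagRels Γ) :=
  (L.map (word Γ)).reverse.prod

theorem listProd_cons (f : V →₀ ℤ) (L : List (V →₀ ℤ)) :
    listProd Γ (f :: L) = listProd Γ L * word Γ f := by
  simp [listProd]

/-- The list consists of exponent vectors supported on cliques, so it encodes central words. -/
def IsCliqueList (Γ : SimpleGraph V) (L : List (V →₀ ℤ)) : Prop :=
  ∀ f ∈ L, Γ.IsClique (f.support : Set V)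

/-- The greedy moves on a list of exponent vectors: delete a trivial word, or move a vertex power
from a word to the next one if the vertex commutes with the latter. -/
inductive GreedyMove (Γ : SimpleGraph V) : List (V →₀ ℤ) → List (V →₀ ℤ) → Prop
  | delete (L : List (V →₀ ℤ)) : GreedyMove Γ (0 :: L) L
  | shift (f f' : V →₀ ℤ) (L : List (V →₀ ℤ)) (v : V) :
      v ∈ f.support → Commute (vertex Γ v) (word Γ f') →
      GreedyMove Γ (f :: f' :: L) (f.erase v :: (f' + Finsupp.single v (f v)) :: L)
  | cons (f : V →₀ ℤ) {L L' : List (V →₀ ℤ)} :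
      GreedyMove Γ L L' → GreedyMove Γ (f :: L) (f :: L')

/-- The potential of the greedy moves: a word at position `p` from the left, counted from `1`,
contributes `p` for each of its letters and `p` for itself. -/
def weight : List (V →₀ ℤ) → ℕ
  | [] => 0
  | f :: L => (L.length + 1) * (f.support.card + 1) + weight L

namespace GreedyMove

theorem isCliqueList {L L' : List (V →₀ ℤ)} (h : GreedyMove Γ L L') (hL : IsCliqueList Γ L) :
    IsCliqueList Γ L' := by
  induction h with
  | delete L => exact (List.forall_mem_cons.1 hL).2
  | shift f f' L v _ hcomm =>
    obtain ⟨hf, hL⟩ := List.forall_mem_cons.1 hL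
    obtain ⟨hf', hL⟩ := List.forall_mem_cons.1 hL
    have herase : Γ.IsClique ((f.erase v).support : Set V) := by
      classical
      exact hf.subset (by simp [Finsupp.support_erase])
    have hadd : Γ.IsClique ((f' + Finsupp.single v (f v)).support : Set V) :=
      (isClique_insert_of_commute hf' hcomm).subset (coe_support_add_single_subset f' v (f v))
    exact List.forall_mem_cons.2 ⟨herase, List.forall_mem_cons.2 ⟨hadd, hL⟩⟩
  | cons f _ ih =>
    obtain ⟨hf, hL⟩ := List.forall_mem_cons.1 hL
    exact List.forall_mem_cons.2 ⟨hf, ih hL⟩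

theorem listProd_eq {L L' : List (V →₀ ℤ)} (h : GreedyMove Γ L L') (hL : IsCliqueList Γ L) :
    listProd Γ L' = listProd Γ L := by
  induction h with
  | delete L => rw [listProd_cons, word, zpowProd_zero, mul_one]
  | shift f f' L v _ hcomm =>
    obtain ⟨hf, hL⟩ := List.forall_mem_cons.1 hL
    have hinsert := isClique_insert_of_commute (List.forall_mem_cons.1 hL).1 hcomm
    have hword : word Γ (f' + Finsupp.single v (f v)) = word Γ f' * vertex Γ v ^ f v := by
      rw [word, zpowProd_add_single (pairwise_commute_vertex hinsert), (hcomm.zpow_left (f v)).eq]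
    simp only [listProd_cons, hword, mul_assoc,
      zpow_mul_zpowProd_erase (pairwise_commute_vertex hf) v]
  | cons f _ ih => rw [listProd_cons, listProd_cons, ih (List.forall_mem_cons.1 hL).2]

theorem length_le {L L' : List (V →₀ ℤ)} (h : GreedyMove Γ L L') : L'.length ≤ L.length := by
  induction h with
  | delete L => simp
  | shift => simp
  | cons f _ ih => simpa using ih

theorem weight_lt {L L' : List (V →₀ ℤ)} (h : GreedyMove Γ L L') : weight L' < weight L := by
  classical
  induction h with
  | delete L => simp [weight]
  | shift f f' L v hv _ =>
    have herase : (f.erase v).support.card + 1 = f.support.card := by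
      rw [Finsupp.support_erase, Finset.card_erase_add_one hv]
    have hadd : (f' + Finsupp.single v (f v)).support.card ≤ f'.support.card + 1 :=
      (Finset.card_le_card (by exact_mod_cast coe_support_add_single_subset f' v (f v))).trans
        (Finset.card_insert_le v f'.support)
    simp only [weight, List.length_cons, herase]
    nlinarith
  | cons f h ih =>
    simp only [weight]
    exact add_lt_add_of_le_of_lt (Nat.mul_le_mul_right _ (Nat.succ_le_succ h.length_le)) ih

end GreedyMove

/-- The left greedy condition on a list of central words, listed from right to left: no word is
trivial, and no vertex of a word commutes with the word to its left. -/
structure IsGreedy (Γ : SimpleGraph V) (L : List (V →₀ ℤ)) : Prop where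
  ne_zero : ∀ f ∈ L, f ≠ 0
  chain : L.IsChain fun f f' => ∀ v ∈ f.support, ¬ Commute (vertex Γ v) (word Γ f')

theorem isGreedy_of_forall_not_greedyMove {L : List (V →₀ ℤ)} (h : ∀ L', ¬ GreedyMove Γ L L') :
    IsGreedy Γ L := by
  induction L with
  | nil => exact ⟨by simp, .nil⟩
  | cons f L ih =>
    obtain ⟨hne, hchain⟩ := ih fun L' hL' => h _ (.cons f hL')
    have hf : f ≠ 0 := by
      rintro rfl
      exact h L (.delete L)
    refine ⟨List.forall_mem_cons.2 ⟨hf, hne⟩, ?_⟩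
    cases L with
    | nil => exact .singleton f
    | cons f' L =>
      exact hchain.cons_cons fun v hv hcomm => h _ (.shift f f' L v hv hcomm)

theorem exists_isGreedy_listProd_eq (L : List (V →₀ ℤ)) (hL : IsCliqueList Γ L) :
    ∃ L', IsCliqueList Γ L' ∧ IsGreedy Γ L' ∧ listProd Γ L' = listProd Γ L := by
  by_cases h : ∃ L', GreedyMove Γ L L'
  · obtain ⟨L', hmove⟩ := h
    rw [← hmove.listProd_eq hL]
    exact exists_isGreedy_listProd_eq L' (hmove.isCliqueList hL)
  · exact ⟨L, hL, isGreedy_of_forall_not_greedyMove (not_exists.1 h), rfl⟩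
termination_by weight L
decreasing_by exact hmove.weight_lt

theorem isCliqueList_single_cons {L : List (V →₀ ℤ)} (hL : IsCliqueList Γ L) (v : V) (n : ℤ) :
    IsCliqueList Γ (Finsupp.single v n :: L) :=
  List.forall_mem_cons.2
    ⟨(Set.subsingleton_singleton.anti (Finset.coe_singleton v ▸
      Finset.coe_subset.2 Finsupp.support_single_subset)).pairwise _, hL⟩

theorem exists_isCliqueList_listProd_eq (g : PresentedGroup (raagRels Γ)) :
    ∃ L, IsCliqueList Γ L ∧ listProd Γ L = g := by
  have hg : g ∈ Subgroup.closure (Set.range (vertex Γ)) := by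
    rw [PresentedGroup.closure_range_of]
    trivial
  induction hg using Subgroup.closure_induction_right with
  | one => exact ⟨[], by simp [IsCliqueList], by simp [listProd]⟩
  | mul_right x _ y hy ih =>
    obtain ⟨v, rfl⟩ := hy
    obtain ⟨L, hL, rfl⟩ := ih
    exact ⟨_, isCliqueList_single_cons hL v 1, by simp [listProd_cons]⟩
  | mul_inv_cancel x _ y hy ih =>
    obtain ⟨v, rfl⟩ := hy
    obtain ⟨L, hL, rfl⟩ := ih
    exact ⟨_, isCliqueList_single_cons hL v (-1), by simp [listProd_cons, -Finsupp.single_neg]⟩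

end RightAngledArtin

open RightAngledArtin in
theorem left_greedy_normal_form_general {V : Type*} (Γ : SimpleGraph V)
    (g : PresentedGroup (raagRels Γ)) :
    ∃ (k : ℕ) (S : Fin k → List V) (e : Fin k → V → ℤ)
      (w : Fin k → PresentedGroup (raagRels Γ)),
      (∀ i, (S i).Nodup) ∧ (∀ i, S i ≠ []) ∧
      (∀ i, Γ.IsClique {v | v ∈ S i}) ∧
      (∀ i, ∀ v ∈ S i, e i v ≠ 0) ∧
      (∀ i, w i = ((S i).map
        (fun v => PresentedGroup.of (rels := raagRels Γ) v ^ e i v)).prod) ∧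
      g = (List.ofFn w).reverse.prod ∧
      (∀ (i : ℕ) (h : i + 1 < k), ∀ v ∈ S ⟨i, Nat.lt_of_succ_lt h⟩,
        ¬ Commute (PresentedGroup.of (rels := raagRels Γ) v) (w ⟨i + 1, h⟩)) := by
  obtain ⟨L₀, hL₀, rfl⟩ := exists_isCliqueList_listProd_eq g
  obtain ⟨L, hclique, hgreedy, hprod⟩ := exists_isGreedy_listProd_eq L₀ hL₀
  refine ⟨L.length, fun i => (L.get i).support.toList, fun i => L.get i, fun i => word Γ (L.get i),
    fun i => Finset.nodup_toList _, fun i => ?nonempty, fun i => ?clique, fun i v hv => ?nonzero,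
    fun i => rfl, ?product, fun i h v hv => ?greedy⟩
  case nonempty => simpa using hgreedy.ne_zero _ (L.get_mem i)
  case clique => simpa only [Finset.mem_toList, Finset.setOfPred_mem] using hclique _ (L.get_mem i)
  case nonzero => simpa using hv
  case product => rw [← hprod, listProd, ← Function.comp_def, ← List.map_ofFn, List.ofFn_get]
  case greedy => exact List.isChain_iff_getElem.1 hgreedy.chain i h v (Finset.mem_toList.1 hv)

/-- Left greedy normal form: every element of `A(Γ)` is a product
`g = w_k ⋯ w_1` of nontrivial central words (products of nonzero powers of the
vertex generators of a clique) such that no vertex generator occurring in `wᵢ`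
commutes with `w_{i+1}`. -/
theorem left_greedy_normal_form {V : Type*} [Fintype V] (Γ : SimpleGraph V)
    (g : PresentedGroup (raagRels Γ)) :
    ∃ (k : ℕ) (S : Fin k → List V) (e : Fin k → V → ℤ)
      (w : Fin k → PresentedGroup (raagRels Γ)),
      (∀ i, (S i).Nodup) ∧ (∀ i, S i ≠ []) ∧
      (∀ i, Γ.IsClique {v | v ∈ S i}) ∧
      (∀ i, ∀ v ∈ S i, e i v ≠ 0) ∧
      (∀ i, w i = ((S i).map
        (fun v => PresentedGroup.of (rels := raagRels Γ) v ^ e i v)).prod) ∧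
      g = (List.ofFn w).reverse.prod ∧
      (∀ (i : ℕ) (h : i + 1 < k), ∀ v ∈ S ⟨i, Nat.lt_of_succ_lt h⟩,
        ¬ Commute (PresentedGroup.of (rels := raagRels Γ) v) (w ⟨i + 1, h⟩)) :=
  left_greedy_normal_form_general Γ g
end

section
/- Let Γ₅ be the finite simple graph on vertices {t₁, t₂, t₃, t₄, t₅} with edge set {t₁t₂, t₃t₄, t₁t₃, t₁t₄, t₂t₄, t₂t₅, t₃t₅}, and in A(Γ₅) set ψ₁ = t₁·t₂, ψ₂ = t₃·t₄, ψ₃ = t₅. Then for every integer m the relation ψ₁^{-m} ψ₃^{m} ψ₁^{m} = (ψ₂^{-m} ψ₁^{m} ψ₂^{m})^{-1} · ψ₃^{m} · (ψ₂^{-m} ψ₁^{m} ψ₂^{m}) holds in A(Γ₅); consequently, for every nonzero integer m the homomorphism from the free group of rank 3 to A(Γ₅) sending the three free generators to ψ₁^{m}, ψ₂^{m}, ψ₃^{m} is not injective, so ψ₁^{m}, ψ₂^{m}, ψ₃^{m} never generate a free group of rank three freely. -/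
/-- The graph on vertices `t₁ = 0, …, t₅ = 4` with edge set
`{t₁t₂, t₃t₄, t₁t₃, t₁t₄, t₂t₄, t₂t₅, t₃t₅}`. -/
def gammaFive : SimpleGraph (Fin 5) :=
  SimpleGraph.fromRel (fun i j => (i, j) ∈
    ([(0,1),(2,3),(0,2),(0,3),(1,3),(1,4),(2,4)] : List (Fin 5 × Fin 5)))

/-- The elements `ψ₁ = t₁t₂`, `ψ₂ = t₃t₄`, `ψ₃ = t₅` of `A(Γ₅)`. -/
def psiElt : Fin 3 → PresentedGroup (raagRels gammaFive) :=
  ![PresentedGroup.of 0 * PresentedGroup.of 1,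
    PresentedGroup.of 2 * PresentedGroup.of 3,
    PresentedGroup.of 4]

/-!
Write `x ^ y = y⁻¹ * x * y`. Since `t₄` commutes with `t₁`, `t₂`, `t₃`, and `t₁` with `t₂`, `t₃`,
conjugating `t₁ * t₂` by `t₃ * t₄` gives `t₂ ^ t₃ * t₁`. As `t₅` commutes with `t₂` and `t₃`, hence
with `t₂ ^ t₃`, both `t₁ * t₂` and its conjugate act on `t₅` by conjugation as `t₁` does. Powers of
commuting elements commute, so this passes to powers, while no such relation holds between the
generators of a free group of rank three.
-/

section Conjugation

variable {G : Type*} [Group G] {a b c d e : G}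

theorem conj_mul_eq_conj_of_commute (h : Commute a e) (b : G) :
    (a * b)⁻¹ * e * (a * b) = b⁻¹ * e * b := by
  calc (a * b)⁻¹ * e * (a * b) = b⁻¹ * (a⁻¹ * e * a) * b := by group
    _ = b⁻¹ * e * b := by rw [h.inv_mul_cancel]

theorem mul_conj_mul_eq_of_commute (hab : Commute a b) (hcd : Commute c d) (hac : Commute a c)
    (had : Commute a d) (hbd : Commute b d) :
    (c * d)⁻¹ * (a * b) * (c * d) = c⁻¹ * b * c * a := by
  calc (c * d)⁻¹ * (a * b) * (c * d) = (d * c)⁻¹ * (a * b) * (d * c) := by rw [hcd.eq]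
    _ = c⁻¹ * (a * b) * c := conj_mul_eq_conj_of_commute (had.mul_left hbd).symm c
    _ = c⁻¹ * b * (a * c) := by rw [hab.eq]; simp only [mul_assoc]
    _ = c⁻¹ * b * c * a := by rw [hac.eq]; simp only [mul_assoc]

theorem conj_eq_conj_conj_of_commute (hab : Commute a b) (hcd : Commute c d) (hac : Commute a c)
    (had : Commute a d) (hbd : Commute b d) (hbe : Commute b e) (hce : Commute c e) :
    (a * b)⁻¹ * e * (a * b) =
      ((c * d)⁻¹ * (a * b) * (c * d))⁻¹ * e * ((c * d)⁻¹ * (a * b) * (c * d)) := by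
  have hbce : Commute (c⁻¹ * b * c) e := (hce.inv_left.mul_left hbe).mul_left hce
  calc (a * b)⁻¹ * e * (a * b) = (b * a)⁻¹ * e * (b * a) := by rw [hab.eq]
    _ = a⁻¹ * e * a := conj_mul_eq_conj_of_commute hbe a
    _ = (c⁻¹ * b * c * a)⁻¹ * e * (c⁻¹ * b * c * a) := (conj_mul_eq_conj_of_commute hbce a).symm
    _ = ((c * d)⁻¹ * (a * b) * (c * d))⁻¹ * e * ((c * d)⁻¹ * (a * b) * (c * d)) := by
      rw [mul_conj_mul_eq_of_commute hab hcd hac had hbd]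

theorem zpow_conj_eq_conj_conj_of_commute (hab : Commute a b) (hcd : Commute c d)
    (hac : Commute a c) (had : Commute a d) (hbd : Commute b d) (hbe : Commute b e)
    (hce : Commute c e) (k l m : ℤ) :
    (a * b) ^ (-k) * e ^ m * (a * b) ^ k =
      ((c * d) ^ (-l) * (a * b) ^ k * (c * d) ^ l)⁻¹ * e ^ m *
        ((c * d) ^ (-l) * (a * b) ^ k * (c * d) ^ l) := by
  rw [zpow_neg, zpow_neg, hab.mul_zpow, hcd.mul_zpow]
  exact conj_eq_conj_conj_of_commute (hab.zpow_zpow k k) (hcd.zpow_zpow l l) (hac.zpow_zpow k l)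
    (had.zpow_zpow k l) (hbd.zpow_zpow k l) (hbe.zpow_zpow k m) (hce.zpow_zpow l m)

end Conjugation

theorem not_injective_lift_of_conj_eq_conj_conj {G : Type*} [Group G] {x y z : G}
    (h : x⁻¹ * z * x = (y⁻¹ * x * y)⁻¹ * z * (y⁻¹ * x * y)) :
    ¬ Function.Injective (FreeGroup.lift ![x, y, z]) := by
  intro hinj
  let X : Fin 3 → FreeGroup (Fin 3) := FreeGroup.of
  -- Equality in a free group is decided by comparing reduced words.
  have hne : (X 0)⁻¹ * X 2 * X 0 ≠ ((X 1)⁻¹ * X 0 * X 1)⁻¹ * X 2 * ((X 1)⁻¹ * X 0 * X 1) := by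
    decide
  exact hne (hinj (by simpa [X] using h))

theorem commute_of_adj {V : Type*} {Γ : SimpleGraph V} {u v : V} (h : Γ.Adj u v) :
    Commute (PresentedGroup.of u : PresentedGroup (raagRels Γ)) (PresentedGroup.of v) := by
  have hrel := PresentedGroup.one_of_mem (rels := raagRels Γ) ⟨u, v, h, rfl⟩
  simp only [map_mul, map_inv] at hrel
  exact mul_inv_eq_iff_eq_mul.mp (mul_inv_eq_one.mp hrel)

theorem psi_powers_not_free_general {G : Type*} [Group G] {t : Fin 5 → G}
    (ht : ∀ u v, gammaFive.Adj u v → Commute (t u) (t v)) (k l m : ℤ) :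
    (t 0 * t 1) ^ (-k) * t 4 ^ m * (t 0 * t 1) ^ k =
      ((t 2 * t 3) ^ (-l) * (t 0 * t 1) ^ k * (t 2 * t 3) ^ l)⁻¹ * t 4 ^ m *
        ((t 2 * t 3) ^ (-l) * (t 0 * t 1) ^ k * (t 2 * t 3) ^ l) ∧
    ¬ Function.Injective
      (FreeGroup.lift ![(t 0 * t 1) ^ k, (t 2 * t 3) ^ l, t 4 ^ m]) := by
  obtain ⟨h01, h23, h02, h03, h13, h14, h24⟩ : gammaFive.Adj 0 1 ∧ gammaFive.Adj 2 3 ∧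
      gammaFive.Adj 0 2 ∧ gammaFive.Adj 0 3 ∧ gammaFive.Adj 1 3 ∧ gammaFive.Adj 1 4 ∧
      gammaFive.Adj 2 4 := by
    simp [gammaFive]
  have hrel := zpow_conj_eq_conj_conj_of_commute (ht _ _ h01) (ht _ _ h23) (ht _ _ h02)
    (ht _ _ h03) (ht _ _ h13) (ht _ _ h14) (ht _ _ h24) k l m
  refine ⟨hrel, not_injective_lift_of_conj_eq_conj_conj ?_⟩
  simpa only [zpow_neg] using hrel

/-- The relation `(ψ₃^m)^{ψ₁^m} = (ψ₃^m)^{(ψ₁^m)^{ψ₂^m}}` holds for all `m`, so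
for `m ≠ 0` the powers `ψ₁^m, ψ₂^m, ψ₃^m` never freely generate a free group of
rank three. -/
theorem psi_powers_not_free :
    (∀ m : ℤ, (psiElt 0) ^ (-m) * (psiElt 2) ^ m * (psiElt 0) ^ m =
      ((psiElt 1) ^ (-m) * (psiElt 0) ^ m * (psiElt 1) ^ m)⁻¹ * (psiElt 2) ^ m *
        ((psiElt 1) ^ (-m) * (psiElt 0) ^ m * (psiElt 1) ^ m)) ∧
    ∀ m : ℤ, m ≠ 0 →
      ¬ Function.Injective
        (FreeGroup.lift ![(psiElt 0) ^ m, (psiElt 1) ^ m, (psiElt 2) ^ m]) :=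
  have general (m : ℤ) := psi_powers_not_free_general (fun _ _ => commute_of_adj) m m m
  ⟨fun m => (general m).1, fun m _ => (general m).2⟩
end
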